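/- Let Ω ⊊ ℂ be a nonempty open, connected, simply connected set, let ω ∈ Ω, and let φ : Ω → 𝔻 be a biholomorphism onto the open unit disk with φ(ω) = 0. Let γ̃ : [0,1] → ℂ be a continuous injective map with γ̃(t) ∈ Ω for all t ∈ (0,1), γ̃(0) ≠ γ̃(1), and γ̃(0), γ̃(1) ∈ ∂Ω (the frontier of Ω); let γ = γ̃([0,1]). Let N be a connected component of Ω \ γ with ω ∉ N. Suppose M > 0 satisfies dist(ω, γ) ≥ M, and ε > 0 satisfies ε² < M/4 and diam(γ) ≤ ε². Then diam(φ(N)) ≤ 30ε/√M. -/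

import Mathlib

open Metric

/-!
Put `f = φ⁻¹`, a univalent function on the unit disc with image `Ω`, and let `a ∈ γ \ Ω`, so that
`g = f - a` is univalent without zeros. By the Bieberbach–Eilenberg inequality, an area estimate for
the logarithm, such a function satisfies Koebe's bound `|g'/g| (0) ≤ 4`, and integrating this bound
along rays, after moving the base point, gives `|g z| ≥ |g 0| ((1 - |z|) / (1 + |z|))²`.

A point `x` of `φ(N)` is close to the unit circle: the segment from `0` to `x` meets `φ(γ)`, where
`|g| ≤ diam γ`. If two points of `φ(N)` lie on the same side of the point `c` of their hyperbolic
geodesic nearest to `0`, this bounds their distance. If they lie on opposite sides and `c ∉ φ(N)`,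
recentre the disc at `c`. Being connected, `φ(N)` then meets every ray from `c` into some
half-disc, so that all these rays meet `φ(γ)`. As `log g` maps a part of the disc injectively into
a cylinder of controlled area, a length–area estimate over these rays gives `|g c| ≤ 36 diam γ`,
and the growth bound shows that `c`, and with it the whole geodesic, is close to the circle.
-/

section Univalent

open Set Filter Topology

/-- A univalent function on `U` is one that is holomorphic and injective on `U`. -/
structure UnivalentOn (f : ℂ → ℂ) (U : Set ℂ) : Prop where
  differentiableOn : DifferentiableOn ℂ f U
  injOn : InjOn f U

namespace UnivalentOn

variable {f g : ℂ → ℂ} {U V : Set ℂ} {z : ℂ}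

lemma comp (hg : UnivalentOn g V) (hf : UnivalentOn f U) (hUV : MapsTo f U V) :
    UnivalentOn (g ∘ f) U :=
  ⟨hg.differentiableOn.comp hf.differentiableOn hUV, hg.injOn.comp hf.injOn hUV⟩

lemma not_eventually_eq (hf : UnivalentOn f U) (hU : U ∈ 𝓝 z) : ¬∀ᶠ w in 𝓝 z, f w = f z := by
  intro h
  have hz : ∀ᶠ w in 𝓝[≠] z, w = z := by
    filter_upwards [nhdsWithin_le_nhds h, nhdsWithin_le_nhds hU] with w hw hwU
    exact hf.injOn hwU (mem_of_mem_nhds hU) hw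
  obtain ⟨w, hw, hne⟩ := (hz.and self_mem_nhdsWithin).exists
  exact hne hw

lemma eventually_deriv_ne_zero (hf : UnivalentOn f U) (hU : U ∈ 𝓝 z) :
    ∀ᶠ w in 𝓝[≠] z, deriv f w ≠ 0 := by
  refine (hf.differentiableOn.analyticAt hU).deriv.eventually_eq_zero_or_eventually_ne_zero
    |>.resolve_left fun h ↦ hf.not_eventually_eq hU ?_
  obtain ⟨r, hr, hball⟩ := eventually_nhds_iff_ball.1 (h.and (eventually_mem_nhds_iff.2 hU))
  filter_upwards [ball_mem_nhds z hr] with w hw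
  exact isOpen_ball.is_const_of_deriv_eq_zero (convex_ball z r).isPreconnected
    (hf.differentiableOn.mono fun y hy ↦ mem_of_mem_nhds (hball y hy).2)
    (fun y hy ↦ (hball y hy).1) hw (mem_ball_self hr)

lemma isOpen_image (hf : UnivalentOn f U) (hU : IsOpen U) (hV : IsOpen V) (hVU : V ⊆ U) :
    IsOpen (f '' V) := by
  rw [isOpen_iff_mem_nhds]
  rintro _ ⟨z, hz, rfl⟩
  have hUz := hU.mem_nhds (hVU hz)
  exact (hf.differentiableOn.analyticAt hUz).eventually_constant_or_nhds_le_map_nhds.resolve_left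
    (hf.not_eventually_eq hUz) (image_mem_map (hV.mem_nhds hz))

lemma continuousOn_of_leftInvOn (hf : UnivalentOn f U) (hU : IsOpen U) (hg : LeftInvOn g f U) :
    ContinuousOn g (f '' U) := by
  refine (continuousOn_open_iff (hf.isOpen_image hU hU subset_rfl)).2 fun W hW ↦ ?_
  rw [inter_comm, ← hg.image_inter']
  exact hf.isOpen_image hU (hW.inter hU) inter_subset_right

lemma of_leftInvOn (hf : UnivalentOn f U) (hU : IsOpen U) (hg : LeftInvOn g f U) :
    UnivalentOn g (f '' U) := by
  have hfU := hf.isOpen_image hU hU subset_rfl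
  have hcont := hf.continuousOn_of_leftInvOn hU hg
  have hmaps : MapsTo g (f '' U) U := by
    rintro _ ⟨z, hz, rfl⟩
    rwa [hg hz]
  have hright : LeftInvOn f g (f '' U) := by
    rintro _ ⟨z, hz, rfl⟩
    rw [hg hz]
  refine ⟨fun w hw ↦ DifferentiableAt.differentiableWithinAt ?_, hright.injOn⟩
  have hgw := hcont.continuousAt (hfU.mem_nhds hw)
  refine (Complex.analyticAt_of_differentiable_on_punctured_nhds_of_continuousAt ?_ hgw)
    |>.differentiableAt
  have hpunctured : Tendsto g (𝓝[≠] w) (𝓝[≠] (g w)) := by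
    refine tendsto_nhdsWithin_iff.2 ⟨hgw.tendsto.mono_left nhdsWithin_le_nhds, ?_⟩
    filter_upwards [self_mem_nhdsWithin, nhdsWithin_le_nhds (hfU.mem_nhds hw)] with y hne hy
    exact hright.injOn.ne hy hw hne
  filter_upwards [hpunctured.eventually (hf.eventually_deriv_ne_zero (hU.mem_nhds (hmaps hw))),
    nhdsWithin_le_nhds (hfU.mem_nhds hw)] with y hy hyU
  exact (HasDerivAt.of_local_left_inverse (hcont.continuousAt (hfU.mem_nhds hyU))
    (hf.differentiableOn.differentiableAt (hU.mem_nhds (hmaps hyU))).hasDerivAt hy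
    (eventually_of_mem (hfU.mem_nhds hyU) hright)).differentiableAt

lemma isPreconnected_inter_preimage (hf : UnivalentOn f U) (hU : IsOpen U) {N : Set ℂ}
    (hN : IsPreconnected N) (hNU : N ⊆ f '' U) : IsPreconnected (U ∩ f ⁻¹' N) := by
  have hinv : LeftInvOn (Function.invFunOn f U) f U := hf.injOn.leftInvOn_invFunOn
  have himage : U ∩ f ⁻¹' N = Function.invFunOn f U '' N := by
    rw [inter_comm, ← hinv.image_image' (inter_subset_right), image_preimage_inter,
      inter_eq_self_of_subset_left hNU]
  exact himage ▸ hN.image _ ((hf.continuousOn_of_leftInvOn hU hinv).mono hNU)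

end UnivalentOn

end Univalent

section LogArea

open Set Filter MeasureTheory Topology
open scoped Real ENNReal

/-- The open annulus `a < ‖z‖ < b` centred at the origin. -/
def annulus (a b : ℝ) : Set ℂ := {z | a < ‖z‖ ∧ ‖z‖ < b}

/-- The logarithmic area of `S`, that is, its area with respect to the density `‖w‖⁻²`, which is
the planar area of `log S` and is invariant under `w ↦ w⁻¹`. -/
noncomputable def logArea (S : Set ℂ) : ℝ≥0∞ :=
  ∫⁻ w in S, ENNReal.ofReal (‖w‖ ^ 2)⁻¹

lemma logArea_mono {S T : Set ℂ} (hST : S ⊆ T) : logArea S ≤ logArea T :=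
  lintegral_mono_set hST

variable {a b : ℝ}

lemma isOpen_annulus : IsOpen (annulus a b) :=
  (isOpen_lt continuous_const continuous_norm).inter (isOpen_lt continuous_norm continuous_const)

lemma measurableSet_annulus : MeasurableSet (annulus a b) :=
  isOpen_annulus.measurableSet

lemma annulus_subset_ball : annulus a b ⊆ ball 0 b := fun _ hz ↦ mem_ball_zero_iff.2 hz.2

lemma ne_zero_of_mem_annulus (ha : 0 ≤ a) {z : ℂ} (hz : z ∈ annulus a b) : z ≠ 0 :=
  norm_pos_iff.1 (ha.trans_lt hz.1)

lemma circleMap_mem_annulus {r : ℝ} (hr : 0 ≤ r) (t : ℝ) :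
    circleMap 0 r t ∈ annulus a b ↔ r ∈ Ioo a b := by
  simp [annulus, abs_of_nonneg hr]

lemma lintegral_annulus_eq_prod (ha : 0 ≤ a) (g : ℂ → ℝ≥0∞) :
    ∫⁻ z in annulus a b, g z =
      ∫⁻ p in Ioo a b ×ˢ Ioo (-π) π, ENNReal.ofReal p.1 * g (circleMap 0 p.1 p.2) := by
  have htarget : polarCoord.target = Ioi (0 : ℝ) ×ˢ Ioo (-π) π := rfl
  rw [← lintegral_indicator measurableSet_annulus, ← Complex.lintegral_comp_polarCoord_symm,
    htarget, ← inter_eq_self_of_subset_left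
      (prod_mono_left (Ioo_subset_Ioi_self.trans (Ioi_subset_Ioi ha)) :
        Ioo a b ×ˢ Ioo (-π) π ⊆ Ioi (0 : ℝ) ×ˢ Ioo (-π) π),
    ← setLIntegral_indicator (measurableSet_Ioo.prod measurableSet_Ioo)]
  refine setLIntegral_congr_fun (measurableSet_Ioi.prod measurableSet_Ioo) fun p hp ↦ ?_
  have hpolar : Complex.polarCoord.symm p = circleMap 0 p.1 p.2 := by
    simp [Complex.polarCoord_symm_apply, circleMap_zero, Complex.exp_mul_I]
  by_cases hab : p.1 ∈ Ioo a b
  · simp [hpolar, indicator_of_mem ((circleMap_mem_annulus (le_of_lt hp.1) p.2).2 hab),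
      indicator_of_mem (show p ∈ Ioo a b ×ˢ Ioo (-π) π from ⟨hab, hp.2⟩)]
  · simp [hpolar, indicator_of_notMem (mt (circleMap_mem_annulus (le_of_lt hp.1) p.2).1 hab),
      indicator_of_notMem (show p ∉ Ioo a b ×ˢ Ioo (-π) π from fun h ↦ hab h.1)]

lemma measurable_indicator_of_continuousOn {g : ℂ → ℝ≥0∞} {S : Set ℂ} (hg : ContinuousOn g S)
    (hS : MeasurableSet S) : Measurable (S.indicator g) := by
  classical
  rw [← piecewise_eq_indicator]
  exact hg.measurable_piecewise continuousOn_const hS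

lemma aemeasurable_polar (ha : 0 ≤ a) {g : ℂ → ℝ≥0∞} (hg : Measurable ((annulus a b).indicator g)) :
    AEMeasurable (fun p : ℝ × ℝ ↦ ENNReal.ofReal p.1 * g (circleMap 0 p.1 p.2))
      ((volume.prod volume).restrict (Ioo a b ×ˢ Ioo (-π) π)) := by
  have hcircleMap : Measurable fun p : ℝ × ℝ ↦ circleMap 0 p.1 p.2 := by
    simp only [circleMap]
    fun_prop
  refine AEMeasurable.mul (by fun_prop) ((hg.comp hcircleMap).aemeasurable.congr ?_)
  filter_upwards [ae_restrict_mem (measurableSet_Ioo.prod measurableSet_Ioo)] with p hp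
  exact indicator_of_mem ((circleMap_mem_annulus (ha.trans hp.1.1.le) p.2).2 hp.1) g

lemma lintegral_annulus (ha : 0 ≤ a) {g : ℂ → ℝ≥0∞}
    (hg : Measurable ((annulus a b).indicator g)) :
    ∫⁻ z in annulus a b, g z =
      ∫⁻ r in Ioo a b, ∫⁻ t in Ioo (-π) π, ENNReal.ofReal r * g (circleMap 0 r t) := by
  rw [lintegral_annulus_eq_prod ha, Measure.volume_eq_prod,
    setLIntegral_prod _ (aemeasurable_polar ha hg)]

lemma lintegral_annulus_symm (ha : 0 ≤ a) {g : ℂ → ℝ≥0∞}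
    (hg : Measurable ((annulus a b).indicator g)) :
    ∫⁻ z in annulus a b, g z =
      ∫⁻ t in Ioo (-π) π, ∫⁻ r in Ioo a b, ENNReal.ofReal r * g (circleMap 0 r t) := by
  rw [lintegral_annulus_eq_prod ha, Measure.volume_eq_prod,
    setLIntegral_prod_symm _ (aemeasurable_polar ha hg)]

lemma lintegral_Ioo_inv (ha : 0 < a) (hab : a ≤ b) :
    ∫⁻ r in Ioo a b, ENNReal.ofReal r⁻¹ = ENNReal.ofReal (Real.log (b / a)) := by
  have hint : IntervalIntegrable (fun r : ℝ ↦ r⁻¹) volume a b :=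
    intervalIntegral.intervalIntegrable_inv
      (fun r hr ↦ (ha.trans_le (uIcc_of_le hab ▸ hr).1).ne') continuousOn_id
  rw [← integral_inv_of_pos ha (ha.trans_le hab), intervalIntegral.integral_of_le hab,
    restrict_Ioo_eq_restrict_Ioc, ofReal_integral_eq_lintegral_ofReal hint.1]
  filter_upwards [ae_restrict_mem measurableSet_Ioc] with r hr
  exact inv_nonneg.2 (ha.trans hr.1).le

lemma logArea_annulus (ha : 0 < a) (hab : a ≤ b) :
    logArea (annulus a b) = ENNReal.ofReal (2 * π * Real.log (b / a)) := by
  have hmeas : Measurable fun w : ℂ ↦ ENNReal.ofReal (‖w‖ ^ 2)⁻¹ := by fun_prop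
  have hdensity : ∀ t : ℝ, ∫⁻ r in Ioo a b, ENNReal.ofReal r *
      ENNReal.ofReal (‖circleMap 0 r t‖ ^ 2)⁻¹ = ENNReal.ofReal (Real.log (b / a)) := by
    intro t
    rw [← lintegral_Ioo_inv ha hab]
    refine setLIntegral_congr_fun measurableSet_Ioo fun r hr ↦ ?_
    have hr0 : 0 < r := ha.trans hr.1
    simp only [norm_circleMap_zero, sq_abs]
    rw [← ENNReal.ofReal_mul hr0.le]
    congr 1
    field_simp
  rw [logArea, lintegral_annulus_symm ha.le (hmeas.indicator measurableSet_annulus)]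
  simp only [hdensity, lintegral_const, Measure.restrict_apply_univ, Real.volume_Ioo]
  rw [← ENNReal.ofReal_mul' (by linarith [Real.pi_pos])]
  ring_nf

lemma logArea_image {q : ℂ → ℂ} {A U : Set ℂ} (hU : IsOpen U) (hq : UnivalentOn q U)
    (hA : MeasurableSet A) (hAU : A ⊆ U) :
    logArea (q '' A) = ∫⁻ z in A, ENNReal.ofReal (‖logDeriv q z‖ ^ 2) := by
  have hderiv : ∀ z ∈ A, HasFDerivWithinAt q
      ((ContinuousLinearMap.toSpanSingleton ℂ (deriv q z)).restrictScalars ℝ) A z := fun z hz ↦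
    ((hq.differentiableOn.differentiableAt (hU.mem_nhds (hAU hz))).hasDerivAt.hasFDerivAt
      |>.restrictScalars ℝ).hasFDerivWithinAt
  rw [logArea, lintegral_image_eq_lintegral_abs_det_fderiv_mul volume hA hderiv
    (hq.injOn.mono hAU)]
  refine lintegral_congr fun z ↦ ?_
  have hdet : ((ContinuousLinearMap.toSpanSingleton ℂ (deriv q z)).restrictScalars ℝ).det =
      ‖deriv q z‖ ^ 2 := by
    simp [ContinuousLinearMap.det, LinearMap.det_restrictScalars, Algebra.norm_complex_eq,
      Complex.normSq_eq_norm_sq]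
  rw [hdet, abs_of_nonneg (by positivity), ← ENNReal.ofReal_mul (by positivity), logDeriv_apply,
    norm_div, div_pow, div_eq_mul_inv]

lemma two_pi_mul_sq_norm_le_lintegral_circleMap {P : ℂ → ℂ} {c : ℂ} {ρ : ℝ}
    (hP : DiffContOnCl ℂ P (ball c |ρ|)) :
    ENNReal.ofReal (2 * π * ‖P c‖ ^ 2) ≤
      ∫⁻ t in Ioo (-π) π, ENNReal.ofReal (‖P (circleMap c ρ t)‖ ^ 2) := by
  have hsq : DiffContOnCl ℂ (fun z ↦ P z ^ 2) (ball c |ρ|) := by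
    simpa only [smul_eq_mul, sq] using hP.smul hP
  have hmean : ∫ t in Ioc (-π) π, P (circleMap c ρ t) ^ 2 = 2 * π * P c ^ 2 := by
    have h := hsq.circleAverage
    rw [Real.circleAverage_eq_integral_add (-π),
      intervalIntegral.integral_comp_add_right (fun t ↦ P (circleMap c ρ t) ^ 2), zero_add,
      show 2 * π + -π = π by ring, intervalIntegral.integral_of_le (by linarith [Real.pi_pos]),
      inv_smul_eq_iff₀ (by positivity)] at h
    simpa using h
  calc ENNReal.ofReal (2 * π * ‖P c‖ ^ 2)
      = ‖∫ t in Ioc (-π) π, P (circleMap c ρ t) ^ 2‖ₑ := by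
        rw [hmean, ← ofReal_norm]
        simp [abs_of_pos Real.pi_pos]
    _ ≤ ∫⁻ t in Ioc (-π) π, ‖P (circleMap c ρ t) ^ 2‖ₑ := enorm_integral_le_lintegral_enorm _
    _ = ∫⁻ t in Ioo (-π) π, ENNReal.ofReal (‖P (circleMap c ρ t)‖ ^ 2) := by
        simp only [restrict_Ioo_eq_restrict_Ioc, ← ofReal_norm, norm_pow]

lemma two_pi_mul_log_le_lintegral_annulus {P : ℂ → ℂ} (ha : 0 < a) (hab : a ≤ b)
    (hP : DifferentiableOn ℂ P (ball 0 b)) :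
    ENNReal.ofReal (2 * π * ‖P 0‖ ^ 2 * Real.log (b / a)) ≤
      ∫⁻ z in annulus a b, ENNReal.ofReal (‖P z / z‖ ^ 2) := by
  have hcont : ContinuousOn (fun z ↦ ENNReal.ofReal (‖P z / z‖ ^ 2)) (annulus a b) :=
    ENNReal.continuous_ofReal.comp_continuousOn
      (((hP.continuousOn.mono annulus_subset_ball).div continuousOn_id
        fun z hz ↦ ne_zero_of_mem_annulus ha.le hz).norm.pow 2)
  have hcircle : ∀ ρ ∈ Ioo a b, ENNReal.ofReal (2 * π * ‖P 0‖ ^ 2) * ENNReal.ofReal ρ⁻¹ ≤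
      ∫⁻ t in Ioo (-π) π,
        ENNReal.ofReal ρ * ENNReal.ofReal (‖P (circleMap 0 ρ t) / circleMap 0 ρ t‖ ^ 2) := by
    intro ρ hρ
    have hρ0 : 0 < ρ := ha.trans hρ.1
    have hdensity : ∀ t, ENNReal.ofReal ρ *
        ENNReal.ofReal (‖P (circleMap 0 ρ t) / circleMap 0 ρ t‖ ^ 2) =
          ENNReal.ofReal (‖P (circleMap 0 ρ t)‖ ^ 2) * ENNReal.ofReal ρ⁻¹ := fun t ↦ by
      rw [← ENNReal.ofReal_mul hρ0.le, ← ENNReal.ofReal_mul (by positivity), norm_div,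
        norm_circleMap_zero, abs_of_pos hρ0]
      congr 1
      field_simp
    simp only [hdensity, lintegral_mul_const' _ _ ENNReal.ofReal_ne_top]
    gcongr
    exact two_pi_mul_sq_norm_le_lintegral_circleMap
      (hP.diffContOnCl_ball (closedBall_subset_ball (by rw [abs_of_pos hρ0]; exact hρ.2)))
  calc ENNReal.ofReal (2 * π * ‖P 0‖ ^ 2 * Real.log (b / a))
      = ∫⁻ ρ in Ioo a b, ENNReal.ofReal (2 * π * ‖P 0‖ ^ 2) * ENNReal.ofReal ρ⁻¹ := by
        rw [lintegral_const_mul' _ _ ENNReal.ofReal_ne_top, lintegral_Ioo_inv ha hab,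
          ← ENNReal.ofReal_mul (by positivity)]
    _ ≤ ∫⁻ ρ in Ioo a b, ∫⁻ t in Ioo (-π) π,
          ENNReal.ofReal ρ * ENNReal.ofReal (‖P (circleMap 0 ρ t) / circleMap 0 ρ t‖ ^ 2) :=
        setLIntegral_mono' measurableSet_Ioo hcircle
    _ = ∫⁻ z in annulus a b, ENNReal.ofReal (‖P z / z‖ ^ 2) :=
        (lintegral_annulus ha.le
          (measurable_indicator_of_continuousOn hcont measurableSet_annulus)).symm

end LogArea

section Bieberbach

open Set Filter MeasureTheory Topology
open scoped Real ENNReal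

variable {q : ℂ → ℂ}

lemma UnivalentOn.dslope_ne_zero {U : Set ℂ} {c z : ℂ} (hq : UnivalentOn q U) (hc : c ∈ U)
    (hz : z ∈ U) (hzc : z ≠ c) : dslope q c z ≠ 0 := by
  rw [dslope_of_ne _ hzc, slope_def_field]
  exact div_ne_zero (sub_ne_zero.2 (hq.injOn.ne hz hc hzc)) (sub_ne_zero.2 hzc)

lemma UnivalentOn.exists_logDeriv_eq_div (hq : UnivalentOn q (ball 0 1)) (hq0 : q 0 = 0)
    (hq' : deriv q 0 ≠ 0) : ∃ P : ℂ → ℂ, DifferentiableOn ℂ P (ball 0 1) ∧ P 0 = 1 ∧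
      ∀ z ∈ ball (0 : ℂ) 1, z ≠ 0 → logDeriv q z = P z / z := by
  have h0 : (0 : ℂ) ∈ ball (0 : ℂ) 1 := mem_ball_self one_pos
  have hk : DifferentiableOn ℂ (dslope q 0) (ball 0 1) :=
    (Complex.differentiableOn_dslope (isOpen_ball.mem_nhds h0)).2 hq.differentiableOn
  have hk0 : ∀ z ∈ ball (0 : ℂ) 1, dslope q 0 z ≠ 0 := fun z hz ↦ by
    rcases eq_or_ne z 0 with rfl | hz0
    · rwa [dslope_same]
    · exact hq.dslope_ne_zero h0 hz hz0
  have hqk : q = fun z ↦ z * dslope q 0 z :=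
    funext fun z ↦ by simpa [hq0] using (sub_smul_dslope q 0 z).symm
  refine ⟨fun z ↦ 1 + z * logDeriv (dslope q 0) z, ?_, by simp, fun z hz hz0 ↦ ?_⟩
  · exact (differentiableOn_id.mul ((hk.deriv isOpen_ball).div hk hk0)).const_add 1
  · nth_rw 1 [hqk]
    rw [logDeriv_mul z hz0 (hk0 z hz) differentiableAt_fun_id
      (hk.differentiableAt (isOpen_ball.mem_nhds hz)), logDeriv_id']
    field_simp

lemma UnivalentOn.two_pi_mul_log_le_logArea_image (hq : UnivalentOn q (ball 0 1)) (hq0 : q 0 = 0)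
    (hq' : deriv q 0 ≠ 0) {a b : ℝ} (ha : 0 < a) (hab : a ≤ b) (hb : b ≤ 1) :
    ENNReal.ofReal (2 * π * Real.log (b / a)) ≤ logArea (q '' annulus a b) := by
  obtain ⟨P, hP, hP0, hlogDeriv⟩ := hq.exists_logDeriv_eq_div hq0 hq'
  have hA : annulus a b ⊆ ball 0 1 := annulus_subset_ball.trans (ball_subset_ball hb)
  rw [logArea_image isOpen_ball hq measurableSet_annulus hA,
    setLIntegral_congr_fun measurableSet_annulus fun z hz ↦ by
      rw [hlogDeriv z (hA hz) (ne_zero_of_mem_annulus ha.le hz)]]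
  simpa [hP0] using two_pi_mul_log_le_lintegral_annulus ha hab (hP.mono (ball_subset_ball hb))

lemma logArea_image_inv {S : Set ℂ} (hS : MeasurableSet S) (hS0 : (0 : ℂ) ∉ S) :
    logArea ((fun w ↦ w⁻¹) '' S) = logArea S := by
  have hinv : UnivalentOn (fun w : ℂ ↦ w⁻¹) {0}ᶜ :=
    ⟨differentiableOn_inv, inv_injective.injOn⟩
  rw [logArea_image isOpen_compl_singleton hinv hS (subset_compl_singleton_iff.2 hS0), logArea]
  refine lintegral_congr fun z ↦ ?_
  simp

lemma logArea_le_of_disjoint_inv {S : Set ℂ} {s : ℝ} (hS : MeasurableSet S)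
    (hdisj : Disjoint S ((fun w ↦ w⁻¹) '' S)) (hSs : S ⊆ annulus s s⁻¹) (hs : 0 < s) (hs1 : s ≤ 1) :
    logArea S ≤ ENNReal.ofReal (2 * π * Real.log s⁻¹) := by
  have hS0 : (0 : ℂ) ∉ S := fun h0 ↦ ne_zero_of_mem_annulus hs.le (hSs h0) rfl
  have hunion : S ∪ (fun w ↦ w⁻¹) '' S ⊆ annulus s s⁻¹ := by
    refine union_subset hSs ?_
    rintro _ ⟨w, hw, rfl⟩
    have hw0 : 0 < ‖w‖ := hs.trans (hSs hw).1
    rw [annulus, mem_ofPred_eq, norm_inv, lt_inv_comm₀ hs hw0, inv_lt_inv₀ hw0 hs]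
    exact (hSs hw).symm
  have hSinv : MeasurableSet ((fun w ↦ w⁻¹) '' S) := by
    simpa only [image_inv_eq_inv] using hS.inv
  have hinv : s⁻¹ / s = s⁻¹ ^ 2 := by field_simp
  have htwice : 2 * logArea S ≤ 2 * ENNReal.ofReal (2 * π * Real.log s⁻¹) := calc
    2 * logArea S = logArea S + logArea ((fun w ↦ w⁻¹) '' S) := by
        rw [logArea_image_inv hS hS0, two_mul]
    _ = logArea (S ∪ (fun w ↦ w⁻¹) '' S) := (lintegral_union hSinv hdisj).symm
    _ ≤ logArea (annulus s s⁻¹) := logArea_mono hunion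
    _ = 2 * ENNReal.ofReal (2 * π * Real.log s⁻¹) := by
        rw [logArea_annulus hs (hs1.trans ((one_le_inv₀ hs).2 hs1)), hinv, Real.log_pow,
          ← ENNReal.ofReal_ofNat, ← ENNReal.ofReal_mul zero_le_two]
        push_cast
        ring_nf
  exact (ENNReal.mul_le_mul_iff_right two_ne_zero ENNReal.ofNat_ne_top).1 htwice

lemma UnivalentOn.eventually_mapsTo_annulus (hq : UnivalentOn q (ball 0 1)) (hq0 : q 0 = 0)
    {c r : ℝ} (hc : 0 < c) (hcq : c < ‖deriv q 0‖) (hr : r < 1) :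
    ∀ᶠ δ in 𝓝[>] (0 : ℝ), MapsTo q (annulus δ r) (annulus (c * δ) (c * δ)⁻¹) := by
  have h0 : (0 : ℂ) ∈ ball (0 : ℂ) 1 := mem_ball_self one_pos
  have hslope : ∀ᶠ z in 𝓝[≠] (0 : ℂ), c < ‖slope q 0 z‖ :=
    (hasDerivAt_iff_tendsto_slope.1 (hq.differentiableOn.differentiableAt
      (isOpen_ball.mem_nhds h0)).hasDerivAt).norm.eventually_const_lt hcq
  obtain ⟨s, hs, hslope⟩ := eventually_nhds_iff_ball.1 (eventually_nhdsWithin_iff.1 hslope)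
  have hq_nhds : q '' ball 0 (min s 1) ∈ 𝓝 0 :=
    (hq.isOpen_image isOpen_ball isOpen_ball (ball_subset_ball (min_le_right s 1))).mem_nhds
      ⟨0, mem_ball_self (lt_min hs one_pos), hq0⟩
  obtain ⟨η, hη, hball⟩ := Metric.mem_nhds_iff.1 hq_nhds
  obtain ⟨B, hB⟩ := (isCompact_closedBall (0 : ℂ) r).exists_bound_of_continuousOn
    (hq.differentiableOn.continuousOn.mono (closedBall_subset_ball hr))
  have hcδ : Tendsto (c * ·) (𝓝[>] 0) (𝓝[>] 0) :=
    tendsto_iff_comap.2 (comap_mulLeft_nhdsGT_zero hc).ge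
  filter_upwards [(hcδ.mono_right nhdsWithin_le_nhds).eventually_lt_const hη,
    (tendsto_inv_nhdsGT_zero.comp hcδ).eventually_gt_atTop B, self_mem_nhdsWithin]
    with δ hδη hδB hδ z hz
  have hz1 : z ∈ ball (0 : ℂ) 1 := mem_ball_zero_iff.2 (hz.2.trans hr)
  refine ⟨?_, (hB z (mem_closedBall_zero_iff.2 hz.2.le)).trans_lt hδB⟩
  by_cases hzs : ‖z‖ < s
  · have := hslope z (mem_ball_zero_iff.2 hzs) (norm_pos_iff.1 (hδ.trans hz.1))
    rw [slope_def_field, hq0, sub_zero, sub_zero, norm_div, lt_div_iff₀ (hδ.trans hz.1)] at this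
    exact (mul_lt_mul_of_pos_left hz.1 hc).trans this
  · refine hδη.trans_le (le_of_not_gt fun h ↦ hzs ?_)
    obtain ⟨w, hw, hwz⟩ := hball (mem_ball_zero_iff.2 h)
    have := hq.injOn (ball_subset_ball (min_le_right s 1) hw) hz1 hwz
    exact this ▸ (mem_ball_zero_iff.1 hw).trans_le (min_le_left s 1)

/- Bieberbach–Eilenberg inequality: `q` and `1 / q` map an annulus `δ < ‖z‖ < r` onto disjoint
sets of equal logarithmic area, both contained in the annulus `c δ < ‖w‖ < (c δ)⁻¹`. -/
lemma UnivalentOn.norm_deriv_zero_le_one (hq : UnivalentOn q (ball 0 1)) (hq0 : q 0 = 0)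
    (hBE : ∀ z ∈ ball (0 : ℂ) 1, ∀ w ∈ ball (0 : ℂ) 1, q z * q w ≠ 1) : ‖deriv q 0‖ ≤ 1 := by
  by_contra! h
  obtain ⟨c, hc1, hcq⟩ := exists_between h
  have hc : 0 < c := one_pos.trans hc1
  obtain ⟨r, hcr, hr⟩ := exists_between (inv_lt_one_of_one_lt₀ hc1)
  have hr0 : 0 < r := (inv_pos.2 hc).trans hcr
  obtain ⟨δ, hmaps, hδ, hδrc⟩ := ((hq.eventually_mapsTo_annulus hq0 hc hcq hr).and
    (Ioo_mem_nhdsGT (lt_min hr0 (inv_pos.2 hc)))).exists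
  have hδr : δ < r := hδrc.trans_le (min_le_left _ _)
  have hcδ : 0 < c * δ := mul_pos hc hδ
  have hcδ1 : c * δ < 1 := (lt_inv_mul_iff₀ hc).1 (by simpa using hδrc.trans_le (min_le_right _ _))
  have hA : annulus δ r ⊆ ball 0 1 := annulus_subset_ball.trans (ball_subset_ball hr.le)
  have himage : MeasurableSet (q '' annulus δ r) :=
    (hq.isOpen_image isOpen_ball isOpen_annulus hA).measurableSet
  have hdisj : Disjoint (q '' annulus δ r) ((fun w ↦ w⁻¹) '' (q '' annulus δ r)) := by
    rw [Set.disjoint_right]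
    rintro _ ⟨_, ⟨z, hz, rfl⟩, rfl⟩ ⟨w, hw, hwz⟩
    refine hBE w (hA hw) z (hA hz) ?_
    rw [hwz, inv_mul_cancel₀ (ne_zero_of_mem_annulus hcδ.le (hmaps hz))]
  have harea := (hq.two_pi_mul_log_le_logArea_image hq0 (norm_pos_iff.1 (hc.trans hcq)) hδ hδr.le
    hr.le).trans (logArea_le_of_disjoint_inv himage hdisj hmaps.image_subset hcδ hcδ1.le)
  rw [ENNReal.ofReal_le_ofReal_iff (mul_nonneg Real.two_pi_pos.le (Real.log_nonneg
    ((one_le_inv₀ hcδ).2 hcδ1.le))), mul_le_mul_iff_right₀ Real.two_pi_pos,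
    Real.log_le_log_iff (div_pos hr0 hδ) (inv_pos.2 hcδ), mul_inv, div_eq_mul_inv,
    mul_le_mul_iff_left₀ (inv_pos.2 hδ)] at harea
  exact hcr.not_ge harea

end Bieberbach

section Koebe

open Set Filter Topology
open scoped ComplexConjugate

variable {g h : ℂ → ℂ}

lemma exists_sq_mul_eq_of_ne_zero (hg : DifferentiableOn ℂ g (ball 0 1))
    (hg0 : ∀ z ∈ ball (0 : ℂ) 1, g z ≠ 0) :
    ∃ h : ℂ → ℂ, DifferentiableOn ℂ h (ball 0 1) ∧ h 0 = 1 ∧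
      ∀ z ∈ ball (0 : ℂ) 1, g z = g 0 * h z ^ 2 := by
  have h0 : (0 : ℂ) ∈ ball (0 : ℂ) 1 := mem_ball_self one_pos
  have hlogDeriv : DifferentiableOn ℂ (logDeriv g) (ball 0 1) := (hg.deriv isOpen_ball).div hg hg0
  obtain ⟨L, hL0, hL⟩ := hlogDeriv.isExactOn_ball.with_val_at 0 0
  refine ⟨fun z ↦ Complex.exp (L z / 2), fun z hz ↦
    ((hL z hz).differentiableAt.div_const 2).cexp.differentiableWithinAt, by simp [hL0],
    fun z hz ↦ ?_⟩
  have hderiv : ∀ w ∈ ball (0 : ℂ) 1, HasDerivAt (fun w ↦ g w * Complex.exp (-L w)) 0 w := by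
    intro w hw
    refine ((hg.differentiableAt (isOpen_ball.mem_nhds hw)).hasDerivAt.mul
      (hL w hw).fun_neg.cexp).congr_deriv ?_
    rw [logDeriv_apply]
    field_simp [hg0 w hw]
    ring
  have hconst := isOpen_ball.is_const_of_deriv_eq_zero (convex_ball (0 : ℂ) 1).isPreconnected
    (fun w hw ↦ (hderiv w hw).differentiableAt.differentiableWithinAt)
    (fun w hw ↦ (hderiv w hw).deriv) hz h0
  rw [hL0, neg_zero, Complex.exp_zero, mul_one] at hconst
  rw [← hconst, mul_assoc, ← Complex.exp_nat_mul, ← Complex.exp_add]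
  simp [mul_div_cancel₀]

lemma UnivalentOn.add_ne_zero_of_sq_mul_eq {U : Set ℂ} {a : ℂ} (hg : UnivalentOn g U)
    (hgh : ∀ z ∈ U, g z = a * h z ^ 2) (hh : ∀ z ∈ U, h z ≠ 0) {z w : ℂ} (hz : z ∈ U)
    (hw : w ∈ U) : h z + h w ≠ 0 := by
  intro hzw
  obtain rfl : z = w := hg.injOn hz hw <| by
    rw [hgh z hz, hgh w hw, eq_neg_of_add_eq_zero_left hzw, neg_sq]
  exact hh z hz (self_eq_neg.1 (eq_neg_of_add_eq_zero_left hzw))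

/- The branch `h` of `√(g / g 0)` omits `-w` whenever it assumes `w`, so that its Cayley transform
`(h - 1) / (h + 1)` satisfies the Bieberbach–Eilenberg condition. -/
lemma UnivalentOn.norm_logDeriv_zero_le_four (hg : UnivalentOn g (ball 0 1))
    (hg0 : ∀ z ∈ ball (0 : ℂ) 1, g z ≠ 0) : ‖logDeriv g 0‖ ≤ 4 := by
  have h0 : (0 : ℂ) ∈ ball (0 : ℂ) 1 := mem_ball_self one_pos
  obtain ⟨h, hh, hh0, hgh⟩ := exists_sq_mul_eq_of_ne_zero hg.differentiableOn hg0
  have hh_ne : ∀ z ∈ ball (0 : ℂ) 1, h z ≠ 0 := fun z hz hhz ↦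
    hg0 z hz (by rw [hgh z hz, hhz, zero_pow two_ne_zero, mul_zero])
  have hadd : ∀ z ∈ ball (0 : ℂ) 1, ∀ w ∈ ball (0 : ℂ) 1, h z + h w ≠ 0 :=
    fun z hz w hw ↦ hg.add_ne_zero_of_sq_mul_eq hgh hh_ne hz hw
  have hden : ∀ z ∈ ball (0 : ℂ) 1, h z + 1 ≠ 0 := fun z hz ↦ hh0 ▸ hadd z hz 0 h0
  have hq : UnivalentOn (fun z ↦ (h z - 1) / (h z + 1)) (ball 0 1) := by
    refine ⟨(hh.sub_const 1).div (hh.add_const 1) hden, fun z hz w hw hzw ↦ hg.injOn hz hw ?_⟩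
    simp only [div_eq_div_iff (hden z hz) (hden w hw)] at hzw
    rw [hgh z hz, hgh w hw, show h z = h w by linear_combination hzw / 2]
  have hhd : HasDerivAt h (deriv h 0) 0 :=
    (hh.differentiableAt (isOpen_ball.mem_nhds h0)).hasDerivAt
  have hderiv_q : deriv (fun z ↦ (h z - 1) / (h z + 1)) 0 = deriv h 0 / 2 := by
    rw [((hhd.sub_const 1).fun_div (hhd.add_const 1) (hden 0 h0)).deriv, hh0]
    ring
  have hlogDeriv : logDeriv g 0 = 2 * deriv h 0 := by
    have hgh' : g =ᶠ[𝓝 0] fun z ↦ g 0 * h z ^ 2 := eventually_of_mem (isOpen_ball.mem_nhds h0) hgh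
    rw [logDeriv_apply, hgh'.deriv_eq, ((hhd.fun_pow 2).const_mul (g 0)).deriv, hh0]
    field_simp [hg0 0 h0]
    simp [mul_comm]
  have hBE := hq.norm_deriv_zero_le_one (by simp [hh0]) fun z hz w hw hzw ↦ hadd z hz w hw <| by
    rw [div_mul_div_comm, div_eq_one_iff_eq (mul_ne_zero (hden z hz) (hden w hw))] at hzw
    linear_combination -hzw / 2
  rw [hderiv_q, norm_div, Complex.norm_ofNat] at hBE
  rw [hlogDeriv, norm_mul, Complex.norm_ofNat]
  linarith

end Koebe

section DiscShift

open Set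
open scoped ComplexConjugate

variable {c x y : ℂ}

/-- The automorphism `x ↦ (x + c) / (1 + c̄ x)` of the unit disc, which carries `0` to `c`. -/
noncomputable def discShift (c x : ℂ) : ℂ := (x + c) / (1 + conj c * x)

lemma discShift_zero (c : ℂ) : discShift c 0 = c := by simp [discShift]

lemma discShift_den_ne_zero (hc : ‖c‖ < 1) (hx : ‖x‖ < 1) : 1 + conj c * x ≠ 0 := by
  intro h
  have hnorm : ‖c‖ * ‖x‖ = 1 := by
    simpa using congrArg norm (eq_neg_of_add_eq_zero_right h)
  exact (mul_lt_one_of_nonneg_of_lt_one_left (norm_nonneg c) hc hx.le).ne hnorm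

lemma norm_sq_sub_norm_sq_discShift (c x : ℂ) :
    ‖1 + conj c * x‖ ^ 2 - ‖x + c‖ ^ 2 = (1 - ‖c‖ ^ 2) * (1 - ‖x‖ ^ 2) := by
  simp only [Complex.sq_norm, Complex.normSq_apply, Complex.add_re, Complex.add_im, Complex.one_re,
    Complex.one_im, Complex.mul_re, Complex.mul_im, Complex.conj_re, Complex.conj_im]
  ring

lemma norm_discShift_lt_one (hc : ‖c‖ < 1) (hx : ‖x‖ < 1) : ‖discShift c x‖ < 1 := by
  have hden := norm_pos_iff.2 (discShift_den_ne_zero hc hx)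
  rw [discShift, norm_div, div_lt_one hden, ← sq_lt_sq₀ (norm_nonneg _) hden.le, ← sub_pos,
    norm_sq_sub_norm_sq_discShift]
  exact mul_pos (sub_pos.2 (pow_lt_one₀ (norm_nonneg c) hc two_ne_zero))
    (sub_pos.2 (pow_lt_one₀ (norm_nonneg x) hx two_ne_zero))

lemma discShift_sub (hc : ‖c‖ < 1) (hx : ‖x‖ < 1) (hy : ‖y‖ < 1) :
    discShift c x - discShift c y =
      (1 - ‖c‖ ^ 2) * (x - y) / ((1 + conj c * x) * (1 + conj c * y)) := by
  rw [discShift, discShift, div_sub_div _ _ (discShift_den_ne_zero hc hx)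
    (discShift_den_ne_zero hc hy), ← Complex.conj_mul']
  ring

lemma mapsTo_discShift (hc : ‖c‖ < 1) : MapsTo (discShift c) (ball 0 1) (ball 0 1) :=
  fun _ hx ↦ mem_ball_zero_iff.2 (norm_discShift_lt_one hc (mem_ball_zero_iff.1 hx))

lemma one_sub_norm_sq_ne_zero (hc : ‖c‖ < 1) : (1 - ‖c‖ ^ 2 : ℂ) ≠ 0 := by
  exact_mod_cast (sub_pos.2 (pow_lt_one₀ (norm_nonneg c) hc two_ne_zero)).ne'

lemma norm_one_sub_norm_sq (hc : ‖c‖ < 1) : ‖(1 - ‖c‖ ^ 2 : ℂ)‖ = 1 - ‖c‖ ^ 2 := by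
  exact_mod_cast Complex.norm_of_nonneg (sub_nonneg.2 (pow_le_one₀ (norm_nonneg c) hc.le))

lemma univalentOn_discShift (hc : ‖c‖ < 1) : UnivalentOn (discShift c) (ball 0 1) := by
  refine ⟨DifferentiableOn.div (by fun_prop) (by fun_prop) fun x hx ↦
    discShift_den_ne_zero hc (mem_ball_zero_iff.1 hx), fun x hx y hy hxy ↦ ?_⟩
  rw [mem_ball_zero_iff] at hx hy
  have hsub := discShift_sub hc hx hy
  rw [hxy, sub_self, eq_comm, div_eq_zero_iff, mul_eq_zero, mul_eq_zero] at hsub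
  simpa [one_sub_norm_sq_ne_zero hc, discShift_den_ne_zero hc hx, discShift_den_ne_zero hc hy,
    sub_eq_zero] using hsub

lemma hasDerivAt_discShift_zero (c : ℂ) : HasDerivAt (discShift c) (1 - ‖c‖ ^ 2) 0 := by
  refine (((hasDerivAt_id (0 : ℂ)).add_const c).fun_div
    (((hasDerivAt_id (0 : ℂ)).const_mul (conj c)).const_add 1) (by simp)).congr_deriv ?_
  simp [← Complex.mul_conj']

end DiscShift

section Growth

open Set
open scoped ComplexConjugate

variable {g : ℂ → ℂ}

lemma UnivalentOn.norm_logDeriv_le (hg : UnivalentOn g (ball 0 1))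
    (hg0 : ∀ z ∈ ball (0 : ℂ) 1, g z ≠ 0) {c : ℂ} (hc : c ∈ ball (0 : ℂ) 1) :
    ‖logDeriv g c‖ ≤ 4 / (1 - ‖c‖ ^ 2) := by
  have hgc : DifferentiableAt ℂ g (discShift c 0) := by
    rw [discShift_zero]
    exact hg.differentiableOn.differentiableAt (isOpen_ball.mem_nhds hc)
  rw [mem_ball_zero_iff] at hc
  have hc2 : 0 < 1 - ‖c‖ ^ 2 := sub_pos.2 (pow_lt_one₀ (norm_nonneg c) hc two_ne_zero)
  have hzero := hg.comp (univalentOn_discShift hc) (mapsTo_discShift hc)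
    |>.norm_logDeriv_zero_le_four fun z hz ↦ hg0 _ (mapsTo_discShift hc hz)
  rw [logDeriv_comp hgc (hasDerivAt_discShift_zero c).differentiableAt, discShift_zero,
    (hasDerivAt_discShift_zero c).deriv, norm_mul] at hzero
  rwa [le_div_iff₀ hc2, ← norm_one_sub_norm_sq hc]

lemma hasDerivAt_log_norm_comp_ray {r : ℝ} {v : ℂ} (hg : DifferentiableAt ℂ g (r * v))
    (hg0 : g (r * v) ≠ 0) :
    HasDerivAt (fun s : ℝ ↦ Real.log ‖g (s * v)‖) (logDeriv g (r * v) * v).re r := by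
  have hray : HasDerivAt (fun s : ℝ ↦ (s : ℂ) * v) v r := by
    simpa using (Complex.ofRealCLM.hasDerivAt (x := r)).mul_const v
  refine ((hg.hasDerivAt.scomp r hray).norm_sq.log (by simpa using hg0)).div_const 2
    |>.congr_deriv ?_ |>.congr_of_eventuallyEq (.of_forall fun s ↦ ?_)
  · have hquot : logDeriv g (r * v) * v =
        ((‖g (r * v)‖ ^ 2)⁻¹ : ℝ) * (v * deriv g (r * v) * conj (g (r * v))) := by
      rw [logDeriv_apply, div_eq_mul_inv, Complex.inv_def, Complex.normSq_eq_norm_sq]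
      ring
    rw [hquot, Complex.re_ofReal_mul, Complex.inner, smul_eq_mul, Function.comp_apply]
    ring
  · simp [Real.log_pow]

lemma hasDerivAt_two_mul_log_sub_log {s : ℝ} (hs : s ∈ Ioo (-1 : ℝ) 1) :
    HasDerivAt (fun s ↦ 2 * (Real.log (1 - s) - Real.log (1 + s))) (-(4 / (1 - s ^ 2))) s := by
  have hsub : 1 - s ≠ 0 := by linarith [hs.2]
  have hadd : 1 + s ≠ 0 := by linarith [hs.1]
  refine (((((hasDerivAt_id' s).const_sub 1).log hsub).fun_sub
    (((hasDerivAt_id' s).const_add 1).log hadd)).const_mul 2).congr_deriv ?_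
  rw [show 1 - s ^ 2 = (1 - s) * (1 + s) by ring]
  field_simp
  ring

lemma UnivalentOn.le_norm_ray (hg : UnivalentOn g (ball 0 1))
    (hg0 : ∀ z ∈ ball (0 : ℂ) 1, g z ≠ 0) {v : ℂ} (hv : ‖v‖ = 1) {r : ℝ} (hr : r ∈ Ico (0 : ℝ) 1) :
    ‖g 0‖ * ((1 - r) / (1 + r)) ^ 2 ≤ ‖g (r * v)‖ := by
  have hnorm : ∀ s ∈ Ico (0 : ℝ) 1, ‖(s : ℂ) * v‖ = s := fun s hs ↦ by
    rw [norm_mul, hv, mul_one, Complex.norm_of_nonneg hs.1]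
  have hray : ∀ s ∈ Ico (0 : ℝ) 1, (s : ℂ) * v ∈ ball (0 : ℂ) 1 := fun s hs ↦
    mem_ball_zero_iff.2 ((hnorm s hs).trans_lt hs.2)
  have hderiv := fun s (hs : s ∈ Ico (0 : ℝ) 1) ↦
    (hasDerivAt_log_norm_comp_ray (hg.differentiableOn.differentiableAt
      (isOpen_ball.mem_nhds (hray s hs))) (hg0 _ (hray s hs))).fun_sub
    (hasDerivAt_two_mul_log_sub_log ⟨by linarith [hs.1], hs.2⟩)
  have hmono : MonotoneOn
      (fun s : ℝ ↦ Real.log ‖g (s * v)‖ - 2 * (Real.log (1 - s) - Real.log (1 + s))) (Ico 0 1) := by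
    refine monotoneOn_of_hasDerivWithinAt_nonneg (convex_Ico 0 1)
      (fun s hs ↦ (hderiv s hs).continuousAt.continuousWithinAt)
      (fun s hs ↦ (hderiv s (interior_subset hs)).hasDerivWithinAt) fun s hs ↦ ?_
    have hs := interior_subset hs
    have hbound := hg.norm_logDeriv_le hg0 (hray s hs)
    have hre := (abs_le.1 (Complex.abs_re_le_norm (logDeriv g (s * v) * v))).1
    rw [norm_mul, hv, mul_one] at hre
    rw [hnorm s hs] at hbound
    linarith
  have hgr := norm_pos_iff.2 (hg0 _ (hray r hr))
  have hg00 := norm_pos_iff.2 (hg0 0 (mem_ball_self one_pos))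
  have hr1 : 0 < 1 - r := sub_pos.2 hr.2
  have hr2 : 0 < 1 + r := add_pos_of_pos_of_nonneg one_pos hr.1
  have h := hmono (left_mem_Ico.2 one_pos) hr hr.1
  simp only [Complex.ofReal_zero, zero_mul, sub_zero, add_zero, Real.log_one, sub_self,
    mul_zero] at h
  rw [← Real.log_le_log_iff (by positivity) hgr, Real.log_mul hg00.ne' (by positivity),
    Real.log_pow, Real.log_div hr1.ne' hr2.ne']
  push_cast
  linarith

lemma UnivalentOn.le_norm (hg : UnivalentOn g (ball 0 1))
    (hg0 : ∀ z ∈ ball (0 : ℂ) 1, g z ≠ 0) {z : ℂ} (hz : z ∈ ball (0 : ℂ) 1) :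
    ‖g 0‖ * ((1 - ‖z‖) / (1 + ‖z‖)) ^ 2 ≤ ‖g z‖ := by
  have h := hg.le_norm_ray hg0 (Complex.norm_exp_ofReal_mul_I z.arg)
    ⟨norm_nonneg z, mem_ball_zero_iff.1 hz⟩
  rwa [Complex.norm_mul_exp_arg_mul_I] at h

end Growth

section LengthArea

open Set MeasureTheory
open scoped Real ENNReal

variable {a b : ℝ}

lemma volume_image_le_lintegral_abs_deriv {ℓ ℓ' : ℝ → ℝ} {S : Set ℝ} (hS : MeasurableSet S)
    (hℓ : ∀ r ∈ S, HasDerivWithinAt ℓ (ℓ' r) S r) :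
    volume (ℓ '' S) ≤ ∫⁻ r in S, ENNReal.ofReal |ℓ' r| := by
  simpa [ContinuousLinearMap.det] using addHaar_image_le_lintegral_abs_det_fderiv volume hS
    fun r hr ↦ (hℓ r hr).hasFDerivWithinAt

lemma two_mul_mul_abs_le {K r : ℝ} (d x : ℝ) (hK : 0 < K) (hr : 0 < r) :
    2 * d * |x| ≤ K * (r * x ^ 2) + d ^ 2 / K * r⁻¹ := by
  have hsq : K * (r * x ^ 2) + d ^ 2 / K * r⁻¹ - 2 * d * |x| =
      (K * r * |x| - d) ^ 2 / (K * r) := by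
    rw [← sq_abs x]
    field_simp
    ring
  exact sub_nonneg.1 (hsq ▸ by positivity)

lemma sq_le_log_mul_lintegral {ℓ ℓ' : ℝ → ℝ} {S : Set ℝ} {d : ℝ} (ha : 0 < a) (hab : a < b)
    (hS : MeasurableSet S) (hSab : S ⊆ Ioo a b) (hℓ : ∀ r ∈ S, HasDerivWithinAt ℓ (ℓ' r) S r)
    (hd : 0 ≤ d) (himage : ENNReal.ofReal d ≤ volume (ℓ '' S)) :
    ENNReal.ofReal (d ^ 2) ≤
      ENNReal.ofReal (Real.log (b / a)) * ∫⁻ r in S, ENNReal.ofReal (r * ℓ' r ^ 2) := by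
  set K := Real.log (b / a)
  have hK : 0 < K := Real.log_pos ((one_lt_div ha).2 hab)
  have hamgm : ∀ r ∈ S, ENNReal.ofReal (2 * d) * ENNReal.ofReal |ℓ' r| ≤
      ENNReal.ofReal K * ENNReal.ofReal (r * ℓ' r ^ 2) +
        ENNReal.ofReal (d ^ 2 / K) * ENNReal.ofReal r⁻¹ := fun r hr ↦ by
    have hr0 : 0 < r := ha.trans (hSab hr).1
    rw [← ENNReal.ofReal_mul (by positivity), ← ENNReal.ofReal_mul hK.le,
      ← ENNReal.ofReal_mul (by positivity), ← ENNReal.ofReal_add (by positivity) (by positivity)]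
    exact ENNReal.ofReal_le_ofReal (two_mul_mul_abs_le d (ℓ' r) hK hr0)
  have htotal : ENNReal.ofReal (d ^ 2) + ENNReal.ofReal (d ^ 2) ≤
      ENNReal.ofReal K * (∫⁻ r in S, ENNReal.ofReal (r * ℓ' r ^ 2)) + ENNReal.ofReal (d ^ 2) := calc
    _ = ENNReal.ofReal (2 * d) * ENNReal.ofReal d := by
        rw [← ENNReal.ofReal_add (by positivity) (by positivity),
          ← ENNReal.ofReal_mul (by positivity)]
        ring_nf
    _ ≤ ENNReal.ofReal (2 * d) * ∫⁻ r in S, ENNReal.ofReal |ℓ' r| := by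
        gcongr
        exact himage.trans (volume_image_le_lintegral_abs_deriv hS hℓ)
    _ ≤ ∫⁻ r in S, (ENNReal.ofReal K * ENNReal.ofReal (r * ℓ' r ^ 2) +
          ENNReal.ofReal (d ^ 2 / K) * ENNReal.ofReal r⁻¹) := by
        rw [← lintegral_const_mul' _ _ ENNReal.ofReal_ne_top]
        exact setLIntegral_mono' hS hamgm
    _ = ENNReal.ofReal K * (∫⁻ r in S, ENNReal.ofReal (r * ℓ' r ^ 2)) +
          ENNReal.ofReal (d ^ 2 / K) * ∫⁻ r in S, ENNReal.ofReal r⁻¹ := by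
        rw [lintegral_add_right _ (by fun_prop), lintegral_const_mul' _ _ ENNReal.ofReal_ne_top,
          lintegral_const_mul' _ _ ENNReal.ofReal_ne_top]
    _ ≤ ENNReal.ofReal K * (∫⁻ r in S, ENNReal.ofReal (r * ℓ' r ^ 2)) +
          ENNReal.ofReal (d ^ 2 / K) * ENNReal.ofReal K := by
        gcongr
        exact (lintegral_mono_set hSab).trans_eq (lintegral_Ioo_inv ha hab.le)
    _ = _ := by rw [← ENNReal.ofReal_mul (by positivity), div_mul_cancel₀ _ hK.ne']
  exact (ENNReal.add_le_add_iff_right ENNReal.ofReal_ne_top).1 htotal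

variable {g : ℂ → ℂ}

/-- The part of `annulus a b` on which `δ < ‖g‖ < m`; the length–area estimate compares its image,
which lies in `annulus δ m`, with the lengths of `log ‖g‖` along rays. -/
def annulusLevel (g : ℂ → ℂ) (a b δ m : ℝ) : Set ℂ :=
  annulus a b ∩ g ⁻¹' annulus δ m

lemma isOpen_annulusLevel {δ m : ℝ} (hg : ContinuousOn g (annulus a b)) :
    IsOpen (annulusLevel g a b δ m) :=
  hg.isOpen_inter_preimage isOpen_annulus isOpen_annulus

lemma exists_norm_circleMap_eq {t y : ℝ} (hg : ContinuousOn g (ball 0 b)) (ha : 0 ≤ a) {δ : ℝ}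
    (hr : ∃ r ∈ Ioo a b, ‖g (circleMap 0 r t)‖ ≤ δ) (hy : y ∈ Ioo δ ‖g (circleMap 0 a t)‖) :
    ∃ r ∈ Ioo a b, ‖g (circleMap 0 r t)‖ = y := by
  obtain ⟨ρ, hρ, hρδ⟩ := hr
  have hcont : ContinuousOn (fun r ↦ ‖g (circleMap 0 r t)‖) (Icc a ρ) := by
    refine (hg.comp (f := (circleMap 0 · t)) ?_ fun r hr ↦ mem_ball_zero_iff.2 ?_).norm
    · simp only [circleMap]
      fun_prop
    · rw [norm_circleMap_zero, abs_of_nonneg (ha.trans hr.1)]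
      exact hr.2.trans_lt hρ.2
  obtain ⟨r, hr, hry⟩ := intermediate_value_Ioo' hρ.1.le hcont ⟨hρδ.trans_lt hy.1, hy.2⟩
  exact ⟨r, ⟨hr.1, hr.2.trans hρ.2⟩, hry⟩

lemma sq_log_div_le_lintegral_ray {δ m t : ℝ} (hg : DifferentiableOn ℂ g (ball 0 1))
    (ha : 0 < a) (hab : a < b) (hb : b ≤ 1) (hδ : 0 < δ) (hδm : δ ≤ m)
    (hm : m ≤ ‖g (circleMap 0 a t)‖) (hr : ∃ r ∈ Ioo a b, ‖g (circleMap 0 r t)‖ ≤ δ) :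
    ENNReal.ofReal (Real.log (m / δ) ^ 2) ≤ ENNReal.ofReal (Real.log (b / a)) *
      ∫⁻ r in Ioo a b, ENNReal.ofReal r * (annulusLevel g a b δ m).indicator
        (fun z ↦ ENNReal.ofReal (‖logDeriv g z‖ ^ 2)) (circleMap 0 r t) := by
  set A := annulusLevel g a b δ m
  set S : Set ℝ := Ioo a b ∩ (circleMap 0 · t) ⁻¹' A
  set ℓ : ℝ → ℝ := fun r ↦ Real.log ‖g (circleMap 0 r t)‖
  have hannulus : annulus a b ⊆ ball 0 1 := annulus_subset_ball.trans (ball_subset_ball hb)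
  have hA : IsOpen A := isOpen_annulusLevel (hg.continuousOn.mono hannulus)
  have hcont : Continuous (circleMap 0 · t) := by
    simp only [circleMap]
    fun_prop
  have hS : MeasurableSet S := measurableSet_Ioo.inter (hA.preimage hcont).measurableSet
  have hℓ : ∀ r ∈ S, HasDerivWithinAt ℓ
      (logDeriv g (circleMap 0 r t) * Complex.exp (t * Complex.I)).re S r := fun r hr ↦ by
    simp only [ℓ, circleMap_zero]
    refine (hasDerivAt_log_norm_comp_ray (hg.differentiableAt (isOpen_ball.mem_nhds ?_))
      ?_).hasDerivWithinAt
    · exact circleMap_zero r t ▸ hannulus hr.2.1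
    · exact circleMap_zero r t ▸ ne_zero_of_mem_annulus hδ.le hr.2.2
  have himage : Ioo (Real.log δ) (Real.log m) ⊆ ℓ '' S := fun y hy ↦ by
    obtain ⟨r, hr, hry⟩ := exists_norm_circleMap_eq (hg.continuousOn.mono (ball_subset_ball hb))
      ha.le hr ⟨(Real.log_lt_iff_lt_exp hδ).1 hy.1,
        ((Real.lt_log_iff_exp_lt (hδ.trans_le hδm)).1 hy.2).trans_le hm⟩
    refine ⟨r, ⟨hr, (circleMap_mem_annulus (ha.trans hr.1).le t).2 hr, ?_⟩, ?_⟩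
    · exact ⟨hry ▸ (Real.log_lt_iff_lt_exp hδ).1 hy.1,
        hry ▸ (Real.lt_log_iff_exp_lt (hδ.trans_le hδm)).1 hy.2⟩
    · simp only [ℓ, hry, Real.log_exp]
  refine (sq_le_log_mul_lintegral ha hab hS inter_subset_left hℓ
    (Real.log_nonneg ((one_le_div hδ).2 hδm)) ?_).trans ?_
  · rw [Real.log_div (hδ.trans_le hδm).ne' hδ.ne', ← Real.volume_Ioo]
    exact measure_mono himage
  · refine mul_le_mul' le_rfl ?_
    refine (setLIntegral_mono' hS fun r hr ↦ ?_).trans (lintegral_mono_set inter_subset_left)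
    rw [indicator_of_mem (mem_preimage.1 hr.2), ← ENNReal.ofReal_mul (ha.trans hr.1.1).le]
    refine ENNReal.ofReal_le_ofReal (mul_le_mul_of_nonneg_left (sq_le_sq.2 ?_) (ha.trans hr.1.1).le)
    rw [abs_norm]
    simpa using Complex.abs_re_le_norm (logDeriv g (circleMap 0 r t) * Complex.exp (t * Complex.I))

lemma UnivalentOn.mul_log_div_le {δ m α β : ℝ} (hg : UnivalentOn g (ball 0 1)) (ha : 0 < a)
    (hab : a < b) (hb : b ≤ 1) (hδ : 0 < δ) (hδm : δ < m) (hα : -π ≤ α) (hβ : β ≤ π)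
    (hm : ∀ t ∈ Ioo α β, m ≤ ‖g (circleMap 0 a t)‖)
    (hray : ∀ t ∈ Ioo α β, ∃ r ∈ Ioo a b, ‖g (circleMap 0 r t)‖ ≤ δ) :
    (β - α) * Real.log (m / δ) ≤ 2 * π * Real.log (b / a) := by
  set A := annulusLevel g a b δ m
  set G := A.indicator fun z ↦ ENNReal.ofReal (‖logDeriv g z‖ ^ 2)
  have hannulus : annulus a b ⊆ ball 0 1 := annulus_subset_ball.trans (ball_subset_ball hb)
  have hA : IsOpen A := isOpen_annulusLevel (hg.differentiableOn.continuousOn.mono hannulus)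
  have hAab : A ⊆ annulus a b := inter_subset_left
  have hG : Measurable ((annulus a b).indicator G) := by
    rw [indicator_indicator, inter_eq_self_of_subset_right hAab]
    refine measurable_indicator_of_continuousOn ?_ hA.measurableSet
    refine ENNReal.continuous_ofReal.comp_continuousOn (ContinuousOn.pow (ContinuousOn.norm ?_) 2)
    exact ((hg.differentiableOn.deriv isOpen_ball).continuousOn.mono (hAab.trans hannulus)).div
      (hg.differentiableOn.continuousOn.mono (hAab.trans hannulus))
      fun z hz ↦ ne_zero_of_mem_annulus hδ.le hz.2
  have hlog : 0 < Real.log (m / δ) := Real.log_pos ((one_lt_div hδ).2 hδm)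
  have harea : ∫⁻ t in Ioo (-π) π, ∫⁻ r in Ioo a b, ENNReal.ofReal r * G (circleMap 0 r t) ≤
      ENNReal.ofReal (2 * π * Real.log (m / δ)) := calc
    _ = ∫⁻ z in annulus a b, G z := (lintegral_annulus_symm ha.le hG).symm
    _ = logArea (g '' A) := by
      rw [logArea_image isOpen_ball hg hA.measurableSet (hAab.trans hannulus),
        setLIntegral_indicator hA.measurableSet, inter_eq_self_of_subset_left hAab]
    _ ≤ logArea (annulus δ m) := logArea_mono (image_subset_iff.2 inter_subset_right)
    _ = _ := logArea_annulus hδ hδm.le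
  have hmul : ENNReal.ofReal ((β - α) * Real.log (m / δ) ^ 2) ≤
      ENNReal.ofReal (Real.log (b / a) * (2 * π * Real.log (m / δ))) := calc
    _ = ∫⁻ _ in Ioo α β, ENNReal.ofReal (Real.log (m / δ) ^ 2) := by
      rw [setLIntegral_const, Real.volume_Ioo, mul_comm, ← ENNReal.ofReal_mul (by positivity)]
    _ ≤ ∫⁻ t in Ioo α β, ENNReal.ofReal (Real.log (b / a)) *
          ∫⁻ r in Ioo a b, ENNReal.ofReal r * G (circleMap 0 r t) :=
      setLIntegral_mono' measurableSet_Ioo fun t ht ↦ sq_log_div_le_lintegral_ray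
        hg.differentiableOn ha hab hb hδ hδm.le (hm t ht) (hray t ht)
    _ ≤ ENNReal.ofReal (Real.log (b / a)) * ENNReal.ofReal (2 * π * Real.log (m / δ)) := by
      rw [lintegral_const_mul' _ _ ENNReal.ofReal_ne_top]
      gcongr
      exact (lintegral_mono_set (Ioo_subset_Ioo hα hβ)).trans harea
    _ = _ := (ENNReal.ofReal_mul (Real.log_nonneg ((one_le_div ha).2 hab.le))).symm
  have hlog' : 0 < Real.log (b / a) := Real.log_pos ((one_lt_div ha).2 hab)
  rw [ENNReal.ofReal_le_ofReal_iff (by positivity)] at hmul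
  refine le_of_mul_le_mul_right ?_ hlog
  linarith

lemma UnivalentOn.norm_zero_le_of_forall_ray {δ α : ℝ} (hg : UnivalentOn g (ball 0 1))
    (hg0 : ∀ z ∈ ball (0 : ℂ) 1, g z ≠ 0) (hα : α ∈ Icc (-π) 0)
    (hray : ∀ t ∈ Ioo α (α + π), ∃ r ∈ Ico (0 : ℝ) 1, ‖g (circleMap 0 r t)‖ ≤ δ) :
    ‖g 0‖ ≤ 36 * δ := by
  have hg00 : 0 < ‖g 0‖ := norm_pos_iff.2 (hg0 0 (mem_ball_self one_pos))
  have hhalf : ∀ r ∈ Icc (0 : ℝ) (1 / 2), ∀ t, ‖g 0‖ / 9 ≤ ‖g (circleMap 0 r t)‖ := fun r hr t ↦ by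
    have hz : ‖circleMap 0 r t‖ ≤ 1 / 2 := by simpa [abs_of_nonneg hr.1] using hr.2
    refine le_trans ?_ (hg.le_norm hg0 (mem_ball_zero_iff.2 (hz.trans_lt one_half_lt_one)))
    have hratio : 1 / 3 ≤ (1 - ‖circleMap 0 r t‖) / (1 + ‖circleMap 0 r t‖) := by
      rw [div_le_div_iff₀ (by norm_num) (by positivity)]
      linarith
    calc ‖g 0‖ / 9 = ‖g 0‖ * (1 / 3) ^ 2 := by ring
      _ ≤ _ := by gcongr
  by_contra! hlt
  obtain ⟨r, hr, hrδ⟩ := hray (α + π / 2) ⟨by linarith [Real.pi_pos], by linarith [Real.pi_pos]⟩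
  have hδ : 0 < δ :=
    (norm_pos_iff.2 (hg0 _ (by simpa [abs_of_nonneg hr.1] using hr.2))).trans_le hrδ
  have hlog := hg.mul_log_div_le one_half_pos one_half_lt_one le_rfl hδ (m := ‖g 0‖ / 9)
    (by linarith) hα.1 (β := α + π) (by linarith [hα.2])
    (fun t _ ↦ hhalf (1 / 2) (by norm_num) t) fun t ht ↦ by
      obtain ⟨r, hr, hrδ⟩ := hray t ht
      refine ⟨r, ⟨?_, hr.2⟩, hrδ⟩
      by_contra! hr2
      linarith [hhalf r ⟨hr.1, hr2⟩ t]
  have hlt_log : Real.log (2 ^ 2) < Real.log (‖g 0‖ / 9 / δ) :=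
    Real.log_lt_log (by norm_num) (by rw [lt_div_iff₀ hδ]; linarith)
  rw [add_sub_cancel_left, one_div_one_div] at hlog
  rw [Real.log_pow, Nat.cast_ofNat] at hlt_log
  linarith [mul_lt_mul_of_pos_left hlt_log Real.pi_pos]

end LengthArea

section Rays

open Set
open scoped Real

lemma arg_mul_exp_mul_I_eq_iff {z : ℂ} (hz : z ≠ 0) {θ u : ℝ} (hu : u ∈ Ioc (-π) π) :
    Complex.arg (z * Complex.exp (θ * Complex.I)) = u ↔
      (Complex.arg z : Real.Angle) = ↑(u - θ) := by
  rw [Real.Angle.coe_sub, eq_sub_iff_add_eq, ← Real.Angle.coe_toIocMod θ (-π),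
    ← Complex.arg_exp_mul_I, ← Complex.arg_mul_coe_angle hz (Complex.exp_ne_zero _),
    Complex.arg_coe_angle_eq_iff_eq_toReal,
    Real.Angle.toReal_coe_eq_self_iff_mem_Ioc.2 hu]

-- If the argument omits a value, the branch of the argument cut along that ray is continuous.
lemma Ioo_subset_arg_image_or {Q : Set ℂ} (hQ : IsPreconnected Q) (h0 : (0 : ℂ) ∉ Q) {x y : ℝ}
    (hx : x < 0) (hy : 0 < y) (hxQ : (x : ℂ) ∈ Q) (hyQ : (y : ℂ) ∈ Q) :
    Ioo 0 π ⊆ Complex.arg '' Q ∨ Ioo (-π) 0 ⊆ Complex.arg '' Q := by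
  refine or_iff_not_imp_right.2 fun hlower t ht ↦ ?_
  obtain ⟨s, hs, hsQ⟩ := not_subset.1 hlower
  have hne : ∀ z ∈ Q, z ≠ 0 := fun z hz hz0 ↦ h0 (hz0 ▸ hz)
  set θ : ℝ := -s - π
  set F : ℂ → ℝ := fun z ↦ Complex.arg (z * Complex.exp (θ * Complex.I))
  have hF : ContinuousOn F Q := fun z hz ↦ by
    have hslit : z * Complex.exp (θ * Complex.I) ∈ Complex.slitPlane := by
      refine Complex.mem_slitPlane_iff_arg.2
        ⟨fun harg ↦ hsQ ⟨z, hz, ?_⟩, mul_ne_zero (hne z hz) (Complex.exp_ne_zero _)⟩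
      rw [arg_mul_exp_mul_I_eq_iff (hne z hz) ⟨neg_lt_self Real.pi_pos, le_rfl⟩,
        show π - θ = s + 2 * π by ring, Real.Angle.coe_add, Real.Angle.coe_two_pi, add_zero,
        Complex.arg_coe_angle_eq_iff_eq_toReal] at harg
      rw [harg, Real.Angle.toReal_coe_eq_self_iff_mem_Ioc.2 ⟨hs.1, hs.2.le.trans Real.pi_pos.le⟩]
    exact ((Complex.continuousAt_arg hslit).comp (f := (· * Complex.exp (θ * Complex.I)))
      (by fun_prop)).continuousWithinAt
  have hFy : F y = θ := (arg_mul_exp_mul_I_eq_iff (hne _ hyQ)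
    ⟨by linarith [hs.2], by linarith [hs.1, Real.pi_pos]⟩).2 (by
      rw [sub_self, Complex.arg_ofReal_of_nonneg hy.le])
  have hFx : F x = θ + π := (arg_mul_exp_mul_I_eq_iff (hne _ hxQ)
    ⟨by linarith [hs.2, Real.pi_pos], by linarith [hs.1]⟩).2 (by
      rw [add_sub_cancel_left, Complex.arg_ofReal_of_neg hx])
  obtain ⟨z, hz, hzt⟩ : θ + t ∈ F '' Q := hQ.intermediate_value hyQ hxQ hF
    ⟨by linarith [ht.1], by linarith [ht.2]⟩
  refine ⟨z, hz, ?_⟩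
  rw [arg_mul_exp_mul_I_eq_iff (hne z hz) ⟨by linarith [hs.2, ht.1], by linarith [hs.1, ht.2]⟩,
    add_sub_cancel_left, Complex.arg_coe_angle_eq_iff_eq_toReal] at hzt
  rw [hzt, Real.Angle.toReal_coe_eq_self_iff_mem_Ioc.2 ⟨by linarith [ht.1, Real.pi_pos], ht.2.le⟩]

end Rays

section Geodesic

open Set
open scoped ComplexConjugate

variable {r s t : ℝ}

lemma discShift_discShift_neg {c z : ℂ} (hc : ‖c‖ < 1) (hz : ‖z‖ < 1) :
    discShift c (discShift (-c) z) = z := by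
  have hden : 1 - conj c * z ≠ 0 := by
    simpa [sub_eq_add_neg] using discShift_den_ne_zero (c := -c) (by rwa [norm_neg]) hz
  have hc' := one_sub_norm_sq_ne_zero hc
  have hnum : (z - c) / (1 - conj c * z) + c = (1 - ‖c‖ ^ 2) * z / (1 - conj c * z) := by
    rw [div_add' _ _ _ hden, ← Complex.conj_mul']
    ring
  have hdenom : 1 + conj c * ((z - c) / (1 - conj c * z)) =
      (1 - ‖c‖ ^ 2) / (1 - conj c * z) := by
    rw [mul_div_assoc', add_div' _ _ _ hden, ← Complex.conj_mul']
    ring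
  simp only [discShift, map_neg, neg_mul, ← sub_eq_add_neg, hnum, hdenom]
  rw [div_div_div_cancel_right₀ hden, mul_div_cancel_left₀ _ hc']

lemma exists_two_mul_div_eq {h : ℝ} (hh : |h| < 1) :
    ∃ r ∈ Ioo (-1 : ℝ) 1, 2 * r / (1 + r ^ 2) = h := by
  have hcont : ContinuousOn (fun r : ℝ ↦ 2 * r / (1 + r ^ 2)) (Icc (-1) 1) :=
    ContinuousOn.div (by fun_prop) (by fun_prop) fun r _ ↦ by positivity
  refine intermediate_value_Ioo (by norm_num) hcont ?_
  norm_num only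
  exact abs_lt.1 hh

lemma abs_im_two_mul_div_lt_one {z : ℂ} (hz : ‖z‖ < 1) : |2 * z.im / (1 + ‖z‖ ^ 2)| < 1 := by
  rw [abs_div, abs_mul, abs_two, abs_of_pos (by positivity : 0 < 1 + ‖z‖ ^ 2),
    div_lt_one (by positivity)]
  nlinarith [Complex.abs_im_le_norm z, sq_pos_of_pos (sub_pos.2 hz)]

lemma exists_eq_discShift_ofReal {z : ℂ} (hz : ‖z‖ < 1) (hr : r ∈ Ioo (-1 : ℝ) 1)
    (hzr : 2 * r / (1 + r ^ 2) = 2 * z.im / (1 + ‖z‖ ^ 2)) :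
    ∃ s ∈ Ioo (-1 : ℝ) 1, z = discShift (r * Complex.I) s := by
  have hc : ‖(r * Complex.I : ℂ)‖ < 1 := by simpa using abs_lt.2 hr
  have him : (discShift (-(r * Complex.I)) z).im = 0 := by
    rw [div_eq_div_iff (by positivity) (by positivity), Complex.sq_norm,
      Complex.normSq_apply] at hzr
    rw [discShift, Complex.div_im, ← sub_div, div_eq_zero_iff]
    left
    simp only [Complex.add_im, Complex.neg_im, Complex.mul_im, Complex.ofReal_re, Complex.I_im,
      Complex.ofReal_im, Complex.I_re, map_neg, map_mul, Complex.conj_ofReal, Complex.conj_I,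
      Complex.add_re, Complex.one_re, Complex.mul_re, Complex.neg_re, Complex.one_im]
    linarith
  obtain ⟨s, hs⟩ : ∃ s : ℝ, (s : ℂ) = discShift (-(r * Complex.I)) z :=
    ⟨_, Complex.conj_eq_iff_re.1 (Complex.conj_eq_iff_im.2 him)⟩
  refine ⟨s, abs_lt.1 ?_, by rw [hs, discShift_discShift_neg hc hz]⟩
  rw [← Real.norm_eq_abs, ← Complex.norm_real, hs]
  exact norm_discShift_lt_one (by rwa [norm_neg]) hz

/- The hyperbolic geodesic through two points is the intersection of the disc with a circle
orthogonal to its boundary; in the Klein model `n ↦ 2 n / (1 + ‖n‖ ^ 2)` it becomes a chord, and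
`v` is the direction of that chord. -/
lemma exists_eq_mul_discShift {n₁ n₂ : ℂ} (h₁ : ‖n₁‖ < 1) (h₂ : ‖n₂‖ < 1) :
    ∃ v : ℂ, ‖v‖ = 1 ∧ ∃ r ∈ Ioo (-1 : ℝ) 1, ∃ s ∈ Ioo (-1 : ℝ) 1, ∃ t ∈ Ioo (-1 : ℝ) 1,
      n₁ = v * discShift (r * Complex.I) s ∧ n₂ = v * discShift (r * Complex.I) t := by
  set d : ℂ := n₁ / (1 + ‖n₁‖ ^ 2 : ℝ) - n₂ / (1 + ‖n₂‖ ^ 2 : ℝ)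
  set v := Complex.exp (Complex.arg d * Complex.I)
  have hv : ‖v‖ = 1 := Complex.norm_exp_ofReal_mul_I _
  have hvv : v * conj v = 1 := by rw [Complex.mul_conj', hv, Complex.ofReal_one, one_pow]
  have hnorm : ∀ n, ‖conj v * n‖ = ‖n‖ := fun n ↦ by rw [norm_mul, Complex.norm_conj, hv, one_mul]
  have hd : (conj v * d).im = 0 := by
    rw [← Complex.norm_mul_exp_arg_mul_I d, mul_left_comm, mul_comm (conj v), hvv, mul_one,
      Complex.ofReal_im]
  have him : 2 * (conj v * n₁).im / (1 + ‖conj v * n₁‖ ^ 2) =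
      2 * (conj v * n₂).im / (1 + ‖conj v * n₂‖ ^ 2) := by
    rw [mul_sub, mul_div_assoc', mul_div_assoc', Complex.sub_im, Complex.div_ofReal_im,
      Complex.div_ofReal_im, sub_eq_zero] at hd
    rw [hnorm, hnorm, mul_div_assoc, mul_div_assoc, hd]
  obtain ⟨r, hr, hr₁⟩ := exists_two_mul_div_eq (abs_im_two_mul_div_lt_one ((hnorm n₁).trans_lt h₁))
  obtain ⟨s, hs, hns⟩ := exists_eq_discShift_ofReal ((hnorm n₁).trans_lt h₁) hr hr₁
  obtain ⟨t, ht, hnt⟩ := exists_eq_discShift_ofReal ((hnorm n₂).trans_lt h₂) hr (hr₁.trans him)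
  exact ⟨v, hv, r, hr, s, hs, t, ht, by rw [← hns, ← mul_assoc, hvv, one_mul],
    by rw [← hnt, ← mul_assoc, hvv, one_mul]⟩

lemma norm_sq_discShift_den (r s : ℝ) :
    ‖1 + conj (r * Complex.I : ℂ) * s‖ ^ 2 = 1 + r ^ 2 * s ^ 2 := by
  have hre_im : 1 + conj (r * Complex.I : ℂ) * s = (1 : ℝ) + (-(r * s) : ℝ) * Complex.I := by
    push_cast [map_mul, Complex.conj_ofReal, Complex.conj_I]
    ring
  rw [hre_im, Complex.sq_norm, Complex.normSq_add_mul_I]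
  ring

lemma dist_discShift {c x y : ℂ} (hc : ‖c‖ < 1) (hx : ‖x‖ < 1) (hy : ‖y‖ < 1) :
    dist (discShift c x) (discShift c y) =
      (1 - ‖c‖ ^ 2) * dist x y / (‖1 + conj c * x‖ * ‖1 + conj c * y‖) := by
  rw [dist_eq_norm, discShift_sub hc hx hy, norm_div, norm_mul, norm_one_sub_norm_sq hc,
    dist_eq_norm, norm_mul (1 + conj c * x)]

lemma dist_discShift_le_of_neg_of_pos (hr : |r| < 1) (hs : s ∈ Ioo (-1 : ℝ) 0)
    (ht : t ∈ Ioo (0 : ℝ) 1) :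
    dist (discShift (r * Complex.I) s) (discShift (r * Complex.I) t) ≤
      4 * ((1 - |r|) / (1 + |r|)) := by
  have hs1 : ‖(s : ℂ)‖ < 1 := by simpa [abs_of_neg hs.2] using neg_lt.1 hs.1
  have ht1 : ‖(t : ℂ)‖ < 1 := by simpa [abs_of_pos ht.1] using ht.2
  have hnorm : ‖(r * Complex.I : ℂ)‖ = |r| := by simp
  have hdist : dist (s : ℂ) t = t - s := by
    rw [dist_comm, Complex.dist_of_im_eq (by simp), Complex.ofReal_re, Complex.ofReal_re,
      Real.dist_eq, abs_of_pos (by linarith [hs.2, ht.1])]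
  have hρ := abs_nonneg r
  have hst : 0 ≤ t - s := by linarith [hs.2, ht.1]
  have hden : 1 + |r| ^ 2 * (t - s) ^ 2 / 4 ≤
      ‖1 + conj (r * Complex.I : ℂ) * s‖ * ‖1 + conj (r * Complex.I : ℂ) * t‖ := by
    rw [← sq_le_sq₀ (by positivity) (by positivity), mul_pow, norm_sq_discShift_den,
      norm_sq_discShift_den, ← sq_abs r]
    have hle : |r| ^ 2 * ((t - s) ^ 2 / 4 - s * t) ≤ 1 * 2 :=
      mul_le_mul (pow_le_one₀ hρ hr.le) (by nlinarith [hs.1, hs.2, ht.1, ht.2])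
        (by nlinarith [hs.2, ht.1]) one_pos.le
    have hprod := mul_nonneg (mul_nonneg (sq_nonneg |r|) (sq_nonneg (t + s))) (sub_nonneg.2 hle)
    linarith
  have hchord : (1 + |r|) ^ 2 * (t - s) ≤ 4 * (1 + |r| ^ 2 * (t - s) ^ 2 / 4) := by
    have hlt : 0 ≤ 2 - (t - s) := by linarith [hs.1, ht.2]
    have hprod := mul_nonneg (mul_nonneg hlt (sub_nonneg.2 hr.le))
      (by positivity : 0 ≤ 1 + 3 * |r|)
    linarith [sq_nonneg (1 - |r|), sq_nonneg (|r| * (2 - (t - s)))]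
  rw [dist_discShift (hnorm.trans_lt hr) hs1 ht1, hdist, hnorm]
  calc (1 - |r| ^ 2) * (t - s) /
        (‖1 + conj (r * Complex.I : ℂ) * s‖ * ‖1 + conj (r * Complex.I : ℂ) * t‖)
      ≤ (1 - |r| ^ 2) * (t - s) / (1 + |r| ^ 2 * (t - s) ^ 2 / 4) :=
        div_le_div_of_nonneg_left
          (mul_nonneg (sub_nonneg.2 (pow_le_one₀ hρ hr.le)) hst) (by positivity) hden
    _ ≤ 4 * ((1 - |r|) / (1 + |r|)) := by
      rw [mul_div_assoc', div_le_div_iff₀ (by positivity) (by positivity)]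
      linarith [mul_le_mul_of_nonneg_left hchord (sub_nonneg.2 hr.le)]

lemma one_sub_norm_sq_le_four_mul {x : ℂ} (hx : ‖x‖ < 1) :
    1 - ‖x‖ ^ 2 ≤ 4 * ((1 - ‖x‖) / (1 + ‖x‖)) := by
  rw [mul_div_assoc', le_div_iff₀ (by positivity)]
  have hsq : (1 + ‖x‖) ^ 2 ≤ 4 := by nlinarith [norm_nonneg x]
  linarith [mul_le_mul_of_nonneg_left hsq (sub_nonneg.2 hx.le)]

lemma dist_discShift_le_of_mul_nonneg (hr : |r| < 1) (hs : |s| < 1) (ht : |t| < 1)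
    (hst : 0 ≤ s * t) (hle : |s| ≤ |t|) :
    dist (discShift (r * Complex.I) s) (discShift (r * Complex.I) t) ≤
      4 * ((1 - ‖discShift (r * Complex.I) s‖) / (1 + ‖discShift (r * Complex.I) s‖)) := by
  have hc : ‖(r * Complex.I : ℂ)‖ < 1 := by simpa using hr
  have hs1 : ‖(s : ℂ)‖ < 1 := by simpa using hs
  have ht1 : ‖(t : ℂ)‖ < 1 := by simpa using ht
  have hdist : dist (s : ℂ) t ≤ 1 - ‖(s : ℂ)‖ ^ 2 := by
    have habs : |s - t| = |t| - |s| := by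
      rw [← sq_eq_sq₀ (abs_nonneg _) (sub_nonneg.2 hle), sub_sq, mul_assoc, ← abs_mul, mul_comm t,
        abs_of_nonneg hst, sq_abs, sq_abs, sq_abs]
      ring
    rw [Complex.dist_of_im_eq (by simp), Complex.ofReal_re, Complex.ofReal_re, Real.dist_eq, habs,
      Complex.norm_real, Real.norm_eq_abs]
    nlinarith [abs_nonneg s]
  have hden : ‖1 + conj (r * Complex.I : ℂ) * s‖ ≤ ‖1 + conj (r * Complex.I : ℂ) * t‖ := by
    rw [← sq_le_sq₀ (norm_nonneg _) (norm_nonneg _), norm_sq_discShift_den, norm_sq_discShift_den,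
      ← sq_abs s, ← sq_abs t]
    gcongr
  have hpos := norm_pos_iff.2 (discShift_den_ne_zero hc hs1)
  refine le_trans ?_ (one_sub_norm_sq_le_four_mul (norm_discShift_lt_one hc hs1))
  rw [dist_discShift hc hs1 ht1]
  have hc2 : 0 ≤ 1 - ‖(r * Complex.I : ℂ)‖ ^ 2 :=
    sub_nonneg.2 (pow_le_one₀ (norm_nonneg _) hc.le)
  calc _ ≤ (1 - ‖(r * Complex.I : ℂ)‖ ^ 2) * (1 - ‖(s : ℂ)‖ ^ 2) /
        (‖1 + conj (r * Complex.I : ℂ) * s‖ * ‖1 + conj (r * Complex.I : ℂ) * s‖) := by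
        have hs2 := dist_nonneg.trans hdist
        gcongr
    _ = 1 - ‖discShift (r * Complex.I) s‖ ^ 2 := by
      rw [← norm_sq_sub_norm_sq_discShift, ← sq, sub_div, div_self (pow_ne_zero 2 hpos.ne'),
        ← div_pow, ← norm_div, discShift]

end Geodesic

section Crosscut

open Set
open scoped Real ComplexConjugate

lemma inter_nonempty_of_connectedComponentIn_diff {X : Type*} [TopologicalSpace X]
    {Ω γ C : Set X} {x y z : X} (hC : IsPreconnected C) (hCΩ : C ⊆ Ω) (hx : x ∈ C) (hy : y ∈ C)
    (hxN : x ∈ connectedComponentIn (Ω \ γ) z) (hyN : y ∉ connectedComponentIn (Ω \ γ) z) :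
    (C ∩ γ).Nonempty := by
  by_contra! hdisj
  have hCdiff : C ⊆ Ω \ γ := subset_sdiff.2 ⟨hCΩ, disjoint_iff_inter_eq_empty.2 hdisj⟩
  exact hyN (connectedComponentIn_eq hxN ▸ hC.subset_connectedComponentIn hx hCdiff hy)

variable {f : ℂ → ℂ} {Ω γ : Set ℂ} {a x y z : ℂ} {δ : ℝ}

lemma UnivalentOn.sub_const {U : Set ℂ} (hf : UnivalentOn f U) (a : ℂ) :
    UnivalentOn (fun z ↦ f z - a) U :=
  ⟨hf.differentiableOn.sub_const a, fun _ hx _ hy hxy ↦ hf.injOn hx hy (sub_left_injective hxy)⟩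

lemma sub_ne_zero_of_mapsTo {U : Set ℂ} (hf : MapsTo f U Ω) (ha : a ∉ Ω) :
    ∀ ζ ∈ U, f ζ - a ≠ 0 :=
  fun _ hζ h ↦ ha (sub_eq_zero.1 h ▸ hf hζ)

lemma exists_mem_segment_norm_sub_le (hf : ContinuousOn f (ball 0 1))
    (hfΩ : MapsTo f (ball 0 1) Ω) (hγ : γ ⊆ closedBall a δ) (hx : x ∈ ball 0 1)
    (hy : y ∈ ball 0 1) (hxN : f x ∈ connectedComponentIn (Ω \ γ) z)
    (hyN : f y ∉ connectedComponentIn (Ω \ γ) z) : ∃ w ∈ segment ℝ y x, ‖f w - a‖ ≤ δ := by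
  have hseg : segment ℝ y x ⊆ ball 0 1 := (convex_ball 0 1).segment_subset hy hx
  obtain ⟨_, ⟨w, hw, rfl⟩, hwγ⟩ := inter_nonempty_of_connectedComponentIn_diff
    ((convex_segment y x).isPreconnected.image f (hf.mono hseg))
    (hfΩ.mono_left hseg).image_subset (mem_image_of_mem f (right_mem_segment ℝ y x))
    (mem_image_of_mem f (left_mem_segment ℝ y x)) hxN hyN
  exact ⟨w, hw, mem_closedBall_iff_norm.1 (hγ hwγ)⟩

lemma UnivalentOn.norm_sub_mul_sq_le (hf : UnivalentOn f (ball 0 1)) (hfΩ : MapsTo f (ball 0 1) Ω)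
    (ha : a ∉ Ω) (hγ : γ ⊆ closedBall a δ) (h0 : f 0 ∉ connectedComponentIn (Ω \ γ) z)
    (hx : x ∈ ball 0 1) (hxN : f x ∈ connectedComponentIn (Ω \ γ) z) :
    ‖f 0 - a‖ * ((1 - ‖x‖) / (1 + ‖x‖)) ^ 2 ≤ δ := by
  obtain ⟨w, hw, hwδ⟩ := exists_mem_segment_norm_sub_le hf.differentiableOn.continuousOn hfΩ hγ hx
    (mem_ball_self one_pos) hxN h0
  have hwx : ‖w‖ ≤ ‖x‖ := by
    obtain ⟨θ, hθ, rfl⟩ := segment_eq_image ℝ (0 : ℂ) x ▸ hw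
    simpa [abs_of_nonneg hθ.1] using mul_le_of_le_one_left (norm_nonneg x) hθ.2
  rw [mem_ball_zero_iff] at hx
  have hw' : 0 ≤ 1 - ‖w‖ := sub_nonneg.2 (hwx.trans hx.le)
  calc ‖f 0 - a‖ * ((1 - ‖x‖) / (1 + ‖x‖)) ^ 2
      ≤ ‖f 0 - a‖ * ((1 - ‖w‖) / (1 + ‖w‖)) ^ 2 := by gcongr
    _ ≤ ‖f w - a‖ := (hf.sub_const a).le_norm
      (sub_ne_zero_of_mapsTo hfΩ ha) (mem_ball_zero_iff.2 (hwx.trans_lt hx))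
    _ ≤ δ := hwδ

lemma UnivalentOn.norm_zero_sub_le {x y : ℝ} (hf : UnivalentOn f (ball 0 1))
    (hfΩ : f '' ball 0 1 = Ω) (ha : a ∉ Ω) (hγ : γ ⊆ closedBall a δ)
    (h0 : f 0 ∉ connectedComponentIn (Ω \ γ) z) (hx : x ∈ Ioo (-1 : ℝ) 0) (hy : y ∈ Ioo (0 : ℝ) 1)
    (hxN : f x ∈ connectedComponentIn (Ω \ γ) z) (hyN : f y ∈ connectedComponentIn (Ω \ γ) z) :
    ‖f 0 - a‖ ≤ 36 * δ := by
  set N := connectedComponentIn (Ω \ γ) z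
  set Q := ball 0 1 ∩ f ⁻¹' N
  have hNΩ : N ⊆ f '' ball 0 1 := (connectedComponentIn_subset _ _).trans (hfΩ ▸ sdiff_subset)
  have hQ : IsPreconnected Q :=
    hf.isPreconnected_inter_preimage isOpen_ball isPreconnected_connectedComponentIn hNΩ
  have hmaps : MapsTo f (ball 0 1) Ω := mapsTo_iff_image_subset.2 hfΩ.le
  have hray : ∀ q ∈ Q, ∃ r ∈ Ico (0 : ℝ) 1, ‖f (circleMap 0 r (Complex.arg q)) - a‖ ≤ δ :=
    fun q hq ↦ by
      obtain ⟨w, hw, hwδ⟩ := exists_mem_segment_norm_sub_le hf.differentiableOn.continuousOn hmaps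
        hγ hq.1 (mem_ball_self one_pos) hq.2 h0
      obtain ⟨θ, hθ, rfl⟩ := segment_eq_image ℝ (0 : ℂ) q ▸ hw
      refine ⟨θ * ‖q‖, ⟨mul_nonneg hθ.1 (norm_nonneg q), ?_⟩, ?_⟩
      · exact (mul_le_of_le_one_left (norm_nonneg q) hθ.2).trans_lt (mem_ball_zero_iff.1 hq.1)
      · rwa [circleMap_zero, Complex.ofReal_mul, mul_assoc, Complex.norm_mul_exp_arg_mul_I,
          ← Complex.real_smul, ← zero_add (θ • q), ← smul_zero (1 - θ)]
  have hhalf : ∀ α ∈ Icc (-π) 0, Ioo α (α + π) ⊆ Complex.arg '' Q → ‖f 0 - a‖ ≤ 36 * δ :=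
    fun α hα hsub ↦ (hf.sub_const a).norm_zero_le_of_forall_ray
      (sub_ne_zero_of_mapsTo hmaps ha) hα fun t ht ↦ by
        obtain ⟨q, hq, rfl⟩ := hsub ht
        exact hray q hq
  have hxQ : (x : ℂ) ∈ Q := ⟨by simpa [abs_of_neg hx.2] using neg_lt.1 hx.1, hxN⟩
  have hyQ : (y : ℂ) ∈ Q := ⟨by simpa [abs_of_pos hy.1] using hy.2, hyN⟩
  rcases Ioo_subset_arg_image_or hQ (fun h ↦ h0 h.2) hx.2 hy.1 hxQ hyQ with hupper | hlower
  · exact hhalf 0 ⟨neg_nonpos.2 Real.pi_pos.le, le_rfl⟩ (by rwa [zero_add])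
  · exact hhalf (-π) ⟨le_rfl, neg_nonpos.2 Real.pi_pos.le⟩ (by rwa [neg_add_cancel])

variable {c v : ℂ}

lemma univalentOn_mul_discShift (hv : ‖v‖ = 1) (hc : ‖c‖ < 1) :
    UnivalentOn (fun x ↦ v * discShift c x) (ball 0 1) := by
  have hv0 : v ≠ 0 := norm_ne_zero_iff.1 (hv ▸ one_ne_zero)
  exact ⟨(univalentOn_discShift hc).differentiableOn.const_mul v, fun x hx y hy hxy ↦
    (univalentOn_discShift hc).injOn hx hy (mul_left_cancel₀ hv0 hxy)⟩

lemma mapsTo_mul_discShift (hv : ‖v‖ = 1) (hc : ‖c‖ < 1) :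
    MapsTo (fun x ↦ v * discShift c x) (ball 0 1) (ball 0 1) := fun x hx ↦ by
  simpa [hv] using mapsTo_discShift hc hx

lemma image_mul_discShift (hv : ‖v‖ = 1) (hc : ‖c‖ < 1) :
    (fun x ↦ v * discShift c x) '' ball 0 1 = ball 0 1 := by
  refine (mapsTo_mul_discShift hv hc).image_subset.antisymm fun w hw ↦ ?_
  have hw' : ‖conj v * w‖ < 1 := by simpa [hv] using hw
  refine ⟨discShift (-c) (conj v * w), mem_ball_zero_iff.2 ?_, ?_⟩
  · exact norm_discShift_lt_one (by rwa [norm_neg]) hw'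
  · simp only [discShift_discShift_neg hc hw', ← mul_assoc, Complex.mul_conj', hv,
      Complex.ofReal_one, one_pow, one_mul]

lemma UnivalentOn.norm_sub_mul_sq_le_of_neg_of_pos {s t : ℝ} (hf : UnivalentOn f (ball 0 1))
    (hfΩ : f '' ball 0 1 = Ω) (ha : a ∉ Ω) (hγ : γ ⊆ closedBall a δ)
    (h0 : f 0 ∉ connectedComponentIn (Ω \ γ) z) (hv : ‖v‖ = 1) (hc : ‖c‖ < 1)
    (hs : s ∈ Ioo (-1 : ℝ) 0) (ht : t ∈ Ioo (0 : ℝ) 1)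
    (hsN : f (v * discShift c s) ∈ connectedComponentIn (Ω \ γ) z)
    (htN : f (v * discShift c t) ∈ connectedComponentIn (Ω \ γ) z) :
    ‖f 0 - a‖ * ((1 - ‖c‖) / (1 + ‖c‖)) ^ 2 ≤ 36 * δ := by
  have hmaps : MapsTo f (ball 0 1) Ω := mapsTo_iff_image_subset.2 hfΩ.le
  have hvc : ‖v * c‖ = ‖c‖ := by rw [norm_mul, hv, one_mul]
  have hvcball : v * c ∈ ball 0 1 := mem_ball_zero_iff.2 (hvc.trans_lt hc)
  by_cases hcN : f (v * c) ∈ connectedComponentIn (Ω \ γ) z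
  · have hle := hf.norm_sub_mul_sq_le hmaps ha hγ h0 hvcball hcN
    rw [hvc] at hle
    have hδ : 0 ≤ δ := le_trans (by positivity) hle
    linarith
  · have hcomp := hf.comp (univalentOn_mul_discShift hv hc) (mapsTo_mul_discShift hv hc)
    calc ‖f 0 - a‖ * ((1 - ‖c‖) / (1 + ‖c‖)) ^ 2 ≤ ‖f (v * c) - a‖ := by
          rw [← hvc]
          exact (hf.sub_const a).le_norm (sub_ne_zero_of_mapsTo hmaps ha) hvcball
      _ ≤ 36 * δ := by
          have hle := hcomp.norm_zero_sub_le (a := a) (γ := γ) (z := z)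
            (by rw [image_comp, image_mul_discShift hv hc, hfΩ]) ha hγ
            (by simpa [discShift_zero] using hcN) hs ht hsN htN
          simpa [discShift_zero] using hle

lemma UnivalentOn.exists_dist_le {n₁ n₂ : ℂ} (hf : UnivalentOn f (ball 0 1))
    (hfΩ : f '' ball 0 1 = Ω) (ha : a ∉ Ω) (hγ : γ ⊆ closedBall a δ)
    (h0 : f 0 ∉ connectedComponentIn (Ω \ γ) z) (hn₁ : n₁ ∈ ball 0 1) (hn₂ : n₂ ∈ ball 0 1)
    (h₁ : f n₁ ∈ connectedComponentIn (Ω \ γ) z) (h₂ : f n₂ ∈ connectedComponentIn (Ω \ γ) z) :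
    ∃ x : ℂ, dist n₁ n₂ ≤ 4 * ((1 - ‖x‖) / (1 + ‖x‖)) ∧
      ‖f 0 - a‖ * ((1 - ‖x‖) / (1 + ‖x‖)) ^ 2 ≤ 36 * δ := by
  have hradial : ∀ x ∈ ball 0 1, f x ∈ connectedComponentIn (Ω \ γ) z →
      ‖f 0 - a‖ * ((1 - ‖x‖) / (1 + ‖x‖)) ^ 2 ≤ 36 * δ := fun x hx hxN ↦ by
    have hle := hf.norm_sub_mul_sq_le (mapsTo_iff_image_subset.2 hfΩ.le) ha hγ h0 hx hxN
    have hδ : 0 ≤ δ := le_trans (by positivity) hle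
    linarith
  obtain ⟨v, hv, r, hr, s, hs, t, ht, rfl, rfl⟩ :=
    exists_eq_mul_discShift (mem_ball_zero_iff.1 hn₁) (mem_ball_zero_iff.1 hn₂)
  have hc : ‖(r * Complex.I : ℂ)‖ = |r| := by simp
  have hr1 : |r| < 1 := abs_lt.2 hr
  have hdist : ∀ x y : ℂ, dist (v * x) (v * y) = dist x y := fun x y ↦ by
    rw [dist_eq_norm, ← mul_sub, norm_mul, hv, one_mul, ← dist_eq_norm]
  have hnorm : ∀ x : ℂ, ‖v * x‖ = ‖x‖ := fun x ↦ by rw [norm_mul, hv, one_mul]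
  rcases le_or_gt 0 (s * t) with hst | hst
  · rcases le_total |s| |t| with hle | hle
    · refine ⟨_, ?_, hradial _ hn₁ h₁⟩
      rw [hdist, hnorm]
      exact dist_discShift_le_of_mul_nonneg hr1 (abs_lt.2 hs) (abs_lt.2 ht) hst hle
    · refine ⟨_, ?_, hradial _ hn₂ h₂⟩
      rw [hdist, hnorm, dist_comm]
      exact dist_discShift_le_of_mul_nonneg hr1 (abs_lt.2 ht) (abs_lt.2 hs) (mul_comm s t ▸ hst) hle
  · refine ⟨r * Complex.I, ?_, ?_⟩
    · rw [hdist, hc]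
      rcases mul_neg_iff.1 hst with ⟨hs0, ht0⟩ | ⟨hs0, ht0⟩
      · rw [dist_comm]
        exact dist_discShift_le_of_neg_of_pos hr1 ⟨ht.1, ht0⟩ ⟨hs0, hs.2⟩
      · exact dist_discShift_le_of_neg_of_pos hr1 ⟨hs.1, hs0⟩ ⟨ht0, ht.2⟩
    · rcases mul_neg_iff.1 hst with ⟨hs0, ht0⟩ | ⟨hs0, ht0⟩
      · exact hf.norm_sub_mul_sq_le_of_neg_of_pos hfΩ ha hγ h0 hv (hc.trans_lt hr1) ⟨ht.1, ht0⟩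
          ⟨hs0, hs.2⟩ h₂ h₁
      · exact hf.norm_sub_mul_sq_le_of_neg_of_pos hfΩ ha hγ h0 hv (hc.trans_lt hr1) ⟨hs.1, hs0⟩
          ⟨ht0, ht.2⟩ h₁ h₂

end Crosscut

theorem lavrentiev_crosscut_diam_general {Ω γ : Set ℂ} {φ : ℂ → ℂ} {ω a z : ℂ} {M ε : ℝ}
    (hΩ : IsOpen Ω) (hω : ω ∈ Ω) (hφ : DifferentiableOn ℂ φ Ω)
    (hφbij : Set.BijOn φ Ω (ball 0 1)) (hφω : φ ω = 0) (hγ : Bornology.IsBounded γ) (haγ : a ∈ γ)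
    (haΩ : a ∉ Ω) (hωN : ω ∉ connectedComponentIn (Ω \ γ) z) (hM : 0 < M)
    (hdist : M ≤ infDist ω γ) (hε : 0 ≤ ε) (hdiam : diam γ ≤ ε ^ 2) :
    diam (φ '' connectedComponentIn (Ω \ γ) z) ≤ 24 * ε / √M := by
  set N := connectedComponentIn (Ω \ γ) z
  set f := Function.invFunOn φ Ω
  have hleft : Set.LeftInvOn f φ Ω := hφbij.injOn.leftInvOn_invFunOn
  have hf : UnivalentOn f (ball 0 1) :=
    hφbij.image_eq ▸ UnivalentOn.of_leftInvOn ⟨hφ, hφbij.injOn⟩ hΩ hleft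
  have hfΩ : f '' ball 0 1 = Ω := by rw [← hφbij.image_eq, hleft.image_image]
  have hf0 : f 0 = ω := by rw [← hφω, hleft hω]
  have hγball : γ ⊆ closedBall a (ε ^ 2) := fun w hw ↦
    (dist_le_diam_of_mem hγ hw haγ).trans hdiam
  have hMle : M ≤ ‖f 0 - a‖ := by
    rw [hf0, ← dist_eq_norm]
    exact hdist.trans (infDist_le_dist_of_mem haγ)
  have hNΩ : N ⊆ Ω := (connectedComponentIn_subset _ _).trans Set.sdiff_subset
  refine diam_le_of_forall_dist_le (by positivity) ?_
  rintro _ ⟨x₁, hx₁, rfl⟩ _ ⟨x₂, hx₂, rfl⟩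
  obtain ⟨x, hdist_le, hx⟩ := hf.exists_dist_le hfΩ haΩ hγball (hf0 ▸ hωN)
    (hφbij.mapsTo (hNΩ hx₁)) (hφbij.mapsTo (hNΩ hx₂)) (by rwa [hleft (hNΩ hx₁)])
    (by rwa [hleft (hNΩ hx₂)])
  set κ := (1 - ‖x‖) / (1 + ‖x‖)
  have hκ : √M * κ ≤ 6 * ε := by
    refine (abs_le_of_sq_le_sq' ?_ (by positivity)).2
    rw [mul_pow, Real.sq_sqrt hM.le]
    linarith [mul_le_mul_of_nonneg_right hMle (sq_nonneg κ)]
  rw [le_div_iff₀ (Real.sqrt_pos.2 hM)]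
  linarith [mul_le_mul_of_nonneg_right hdist_le (Real.sqrt_nonneg M)]

/-- Lavrentiev: if a crosscut `γ` of a simply connected domain
`Ω` stays at distance at least `M` from the base point `ω` and has diameter at
most `ε²` (with `ε² < M/4`), then the image under the normalized Riemann map
`φ : Ω → 𝔻` of the crosscut neighborhood `N` (the connected component of
`Ω \ γ` not containing `ω`) has diameter at most `30ε/√M`. -/
theorem lavrentiev_crosscut_diam
    (Ω : Set ℂ) (hΩne : Ω.Nonempty) (hΩproper : Ω ≠ Set.univ)
    (hΩopen : IsOpen Ω) (hΩconn : IsConnected Ω) (hΩsc : SimplyConnectedSpace Ω)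
    (ω : ℂ) (hω : ω ∈ Ω)
    (φ : ℂ → ℂ) (hφdiff : DifferentiableOn ℂ φ Ω)
    (hφbij : Set.BijOn φ Ω (ball (0 : ℂ) 1)) (hφω : φ ω = 0)
    (γt : ℝ → ℂ) (hγcont : ContinuousOn γt (Set.Icc 0 1))
    (hγinj : Set.InjOn γt (Set.Icc 0 1))
    (hγint : γt '' Set.Ioo 0 1 ⊆ Ω)
    (hγends : γt 0 ≠ γt 1) (hγ0 : γt 0 ∈ frontier Ω) (hγ1 : γt 1 ∈ frontier Ω)
    (γ : Set ℂ) (hγ : γ = γt '' Set.Icc 0 1)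
    (N : Set ℂ) (hN : ∃ z ∈ Ω \ γ, N = connectedComponentIn (Ω \ γ) z)
    (hωN : ω ∉ N)
    (M : ℝ) (hM : 0 < M) (hdist : M ≤ infDist ω γ)
    (ε : ℝ) (hε : 0 < ε) (hεM : ε ^ 2 < M / 4) (hdiam : diam γ ≤ ε ^ 2) :
    diam (φ '' N) ≤ 30 * ε / Real.sqrt M := by
  obtain ⟨z, -, rfl⟩ := hN
  have hγbdd : Bornology.IsBounded γ := hγ ▸ (isCompact_Icc.image_of_continuousOn hγcont).isBounded
  have h0γ : γt 0 ∈ γ := hγ ▸ Set.mem_image_of_mem γt (Set.left_mem_Icc.2 zero_le_one)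
  have h0Ω : γt 0 ∉ Ω := (hΩopen.frontier_eq ▸ hγ0).2
  exact (lavrentiev_crosscut_diam_general hΩopen hω hφdiff hφbij hφω hγbdd h0γ h0Ω hωN hM hdist
    hε.le hdiam).trans (by gcongr; norm_num)
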